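/- Let σ : Σ⁺ → Σ⁺ be a topologically mixing one-sided subshift of finite type with finite alphabet, G a countable group, and T_ψ the group extension determined by a map ψ depending on two coordinates. If T_ψ is transitive and G is not amenable, then h_Gur(T_ψ) < h_Gur(T_{ψ^ab}). -/

import Mathlib

/-!
STATEMENT 3: For a topologically mixing one-sided subshift of finite type with finite
alphabet, a countable group `G` and a transitive group extension `T_ψ` (with `ψ` depending
on two coordinates), the Gurevič entropies satisfy
if `G` is not amenable then `h_Gur(T_ψ) < h_Gur(T_{ψ^ab})`.
-/

open Filter

namespace DS

/-- The one-sided shift space determined by a 0-1 transition matrix `A` on the alphabet `S`. -/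
def Space {S : Type*} (A : S → S → Bool) : Type _ :=
  {x : ℕ → S // ∀ n : ℕ, A (x n) (x (n + 1)) = true}

variable {S : Type*} {A : S → S → Bool}

/-- The (one-sided) shift map. -/
def shift (x : Space A) : Space A :=
  ⟨fun n => x.1 (n + 1), fun n => x.2 (n + 1)⟩

/-- Aperiodicity of the transition matrix: some power of `A` has all entries positive,
i.e. there is `N ≥ 1` such that any two symbols are joined by an admissible word of
length `N`.  (For subshifts of finite type this is topological mixing.) -/
def Aperiodic (A : S → S → Bool) : Prop :=
  ∃ N : ℕ, 0 < N ∧ ∀ i j : S, ∃ w : ℕ → S,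
    w 0 = i ∧ w N = j ∧ ∀ k < N, A (w k) (w (k + 1)) = true

/-- `ψ` depends only on the first two coordinates. -/
def TwoCoord {G : Type*} (ψ : Space A → G) : Prop :=
  ∀ x y : Space A, x.1 0 = y.1 0 → x.1 1 = y.1 1 → ψ x = ψ y

variable {G : Type*} [Group G]

/-- The cocycle `ψⁿ(x) = ψ(x) ψ(σx) ⋯ ψ(σ^{n-1}x)`. -/
def cocycle (ψ : Space A → G) : ℕ → Space A → G
  | 0, _ => 1
  | n + 1, x => ψ x * cocycle ψ n (shift x)

/-- The group extension `T_ψ(x,g) = (σ x, g ψ(x))`. -/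
def T (ψ : Space A → G) (p : Space A × G) : Space A × G :=
  (shift p.1, p.2 * ψ p.1)

/-- Topological transitivity of the group extension `T_ψ` (density of some orbit in the
product of the shift space, with its product topology over the discrete alphabet, and the
discrete group: the orbit enters every cylinder-times-group-element set). -/
def TransitiveExt (ψ : Space A → G) : Prop :=
  ∃ p : Space A × G, ∀ (m : ℕ) (y : Space A) (g : G), ∃ n : ℕ,
    (∀ j < m, ((T ψ)^[n] p).1.1 j = y.1 j) ∧ ((T ψ)^[n] p).2 = g

/-- Gurevič entropy of the group extension: the exponential growth rate of the number of
periodic points `σⁿ x = x` with trivial cocycle `ψⁿ(x) = e`. -/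
noncomputable def hGur (ψ : Space A → G) : ℝ :=
  Filter.atTop.limsup fun n : ℕ =>
    Real.log (Nat.card {x : Space A // shift^[n] x = x ∧ cocycle ψ n x = 1}) / n

/-- Amenability of `G`: existence of a Banach mean, i.e. a linear functional on the
bounded real-valued functions on `G` which is `G`-invariant and lies between `inf` and
`sup`. -/
def Amenable (G : Type*) [Group G] : Prop :=
  ∃ m : (G → ℝ) → ℝ,
    (∀ x y : G → ℝ, m (x + y) = m x + m y) ∧
    (∀ (c : ℝ) (x : G → ℝ), m (c • x) = c * m x) ∧
    (∀ x : G → ℝ, Bornology.IsBounded (Set.range x) →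
      (∀ g : G, m (fun h => x (h * g)) = m x) ∧
      sInf (Set.range x) ≤ m x ∧ m x ≤ sSup (Set.range x))

end DS

open DS

open DS

namespace GE

section paths
variable {S : Type*} [Fintype S] {K : Type*} [Group K]

/-- Transfer operator of the skew product. -/
noncomputable def Lop (A : S → S → Bool) (φ : S → S → K) (f : S → K → ℝ) : S → K → ℝ :=
  fun i q => ∑ j, if A i j = true then f j (q * φ i j) else 0

open Classical in
/-- Point mass at `(o,1)`. -/
noncomputable def dlt (o : S) : S → K → ℝ := fun i q => if i = o ∧ q = 1 then 1 else 0

/-- Number of paths of length `n` from `(i,q)` to `(o,1)`. -/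
noncomputable def cnt (A : S → S → Bool) (φ : S → S → K) (n : ℕ) (o : S) : S → K → ℝ :=
  (Lop A φ)^[n] (dlt o)

/-- Existence of a path. -/
inductive Pth {S : Type*} {K : Type*} [Group K] (A : S → S → Bool) (φ : S → S → K) :
    ℕ → S → S → K → Prop
  | nil (i : S) : Pth A φ 0 i i 1
  | cons {n : ℕ} {i k j : S} {g : K} : A i k = true → Pth A φ n k j g →
      Pth A φ (n + 1) i j (φ i k * g)

variable {A : S → S → Bool} {φ : S → S → K}

lemma Pth.append {S K : Type*} [Group K] {A : S → S → Bool} {φ : S → S → K} {n m : ℕ} {i j k : S} {g h : K} (p : Pth A φ n i j g) (q : Pth A φ m j k h) :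
    Pth A φ (n + m) i k (g * h) := by
  induction p with
  | nil i => simpa using q
  | cons ha _ ih =>
    have := Pth.cons ha (ih q)
    rw [← mul_assoc] at this
    convert this using 1
    omega

lemma cnt_zero (o : S) : cnt A φ 0 o = dlt o := rfl

lemma cnt_succ (n : ℕ) (o : S) : cnt A φ (n + 1) o = Lop A φ (cnt A φ n o) := by
  unfold cnt; rw [Function.iterate_succ_apply']

lemma Lop_nonneg {f : S → K → ℝ} (hf : ∀ i q, 0 ≤ f i q) (i : S) (q : K) :
    0 ≤ Lop A φ f i q := by
  unfold Lop
  refine Finset.sum_nonneg fun j _ => ?_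
  split_ifs
  · exact hf _ _
  · exact le_rfl

lemma le_Lop {f : S → K → ℝ} (hf : ∀ i q, 0 ≤ f i q) {i k : S} (ha : A i k = true) (q : K) :
    f k (q * φ i k) ≤ Lop A φ f i q := by
  unfold Lop
  have := Finset.single_le_sum (f := fun j => if A i j = true then f j (q * φ i j) else 0)
    (fun j _ => by
      split_ifs
      · exact hf _ _
      · exact le_rfl) (Finset.mem_univ k)
  simpa [ha] using this

lemma dlt_nonneg {S K : Type*} [Group K] (o : S) (i : S) (q : K) : 0 ≤ dlt o i q := by
  unfold dlt; split_ifs <;> simp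

lemma cnt_nonneg (n : ℕ) (o : S) : ∀ i q, 0 ≤ cnt A φ n o i q := by
  induction n with
  | zero => intro i q; rw [cnt_zero]; exact dlt_nonneg o i q
  | succ n ih => intro i q; rw [cnt_succ]; exact Lop_nonneg ih i q

lemma cnt_le (n : ℕ) (o : S) : ∀ i q, cnt A φ n o i q ≤ (Fintype.card S : ℝ) ^ n := by
  induction n with
  | zero => intro i q; rw [cnt_zero]; unfold dlt; split_ifs <;> simp
  | succ n ih =>
    intro i q; rw [cnt_succ]; unfold Lop
    calc _ ≤ ∑ j : S, (Fintype.card S : ℝ) ^ n := by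
          refine Finset.sum_le_sum fun j _ => ?_
          split_ifs
          · exact ih _ _
          · positivity
      _ = _ := by simp [pow_succ, mul_comm]

lemma one_le_cnt {n : ℕ} {i o : S} {g : K} (p : Pth A φ n i o g) :
    ∀ q, q * g = 1 → 1 ≤ cnt A φ n o i q := by
  induction p with
  | nil i => intro q hq; rw [cnt_zero]; unfold dlt; simp at hq; simp [hq]
  | cons ha _ ih =>
    intro q hq
    rw [cnt_succ]
    exact (ih _ (by rw [mul_assoc]; exact hq)).trans (le_Lop (cnt_nonneg _ _) ha q)

lemma harnack {h : S → K → ℝ} (hf : ∀ i q, 0 ≤ h i q) {l : ℝ} (hl : 0 ≤ l)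
    (hs : ∀ i q, Lop A φ h i q ≤ l * h i q) {n : ℕ} {i j : S} {g : K} (p : Pth A φ n i j g) :
    ∀ q, h j (q * g) ≤ l ^ n * h i q := by
  induction p with
  | nil i => intro q; simp
  | cons ha _ ih =>
    intro q
    rw [← mul_assoc]
    refine (ih _).trans ?_
    rw [pow_succ, mul_assoc]
    exact mul_le_mul_of_nonneg_left ((le_Lop hf ha q).trans (hs _ _)) (by positivity)

lemma cnt_shift {k : ℕ} {i j : S} {g : K} (p : Pth A φ k i j g) :
    ∀ (n : ℕ) (o : S) q, cnt A φ n o j (q * g) ≤ cnt A φ (n + k) o i q := by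
  induction p with
  | nil i => intro n o q; simp
  | cons ha _ ih =>
    intro n o q
    rw [← mul_assoc, ← add_assoc, cnt_succ]
    exact (ih _ _ _).trans (le_Lop (cnt_nonneg _ _) ha q)

/-- Green function: superharmonic. -/
lemma exists_super (o : S) (hirr : ∀ i j g, ∃ n, 0 < n ∧ Pth A φ n i j g) {l : ℝ} (hl : 0 < l)
    (hb : ∃ b : ℝ, 0 ≤ b ∧ b < l ∧ ∀ᶠ n : ℕ in atTop, cnt A φ n o o (1 : K) ≤ b ^ n) :
    ∃ h : S → K → ℝ, (∀ i q, 0 < h i q) ∧ ∀ i q, Lop A φ h i q ≤ l * h i q := by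
  obtain ⟨b, hb0, hbl, hb⟩ := hb
  have hsum : ∀ i q, Summable fun n => (l⁻¹) ^ n * cnt A φ n o i q := by
    intro i q
    obtain ⟨k, -, p⟩ := hirr o i q
    have h1 : Summable fun n : ℕ => b ^ k * (b * l⁻¹) ^ n := by
      refine Summable.mul_left _ (summable_geometric_of_lt_one (by positivity) ?_)
      rw [← div_eq_mul_inv, div_lt_one hl]; exact hbl
    refine Summable.of_norm_bounded_eventually_nat h1 ?_
    have hb' : ∀ᶠ n : ℕ in atTop, cnt A φ (n + k) o o (1 : K) ≤ b ^ (n + k) :=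
      (tendsto_add_atTop_nat k).eventually hb
    filter_upwards [hb'] with n hn
    have h2 := cnt_shift p n o 1
    rw [one_mul] at h2
    rw [Real.norm_eq_abs, abs_of_nonneg (mul_nonneg (by positivity) (cnt_nonneg _ _ _ _))]
    calc _ ≤ (l⁻¹) ^ n * b ^ (n + k) :=
          mul_le_mul_of_nonneg_left (h2.trans hn) (by positivity)
      _ = _ := by rw [mul_pow, pow_add]; ring
  refine ⟨fun i q => ∑' n, (l⁻¹) ^ n * cnt A φ n o i q, ?_, ?_⟩
  · intro i q
    obtain ⟨k, -, p⟩ := hirr i o q⁻¹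
    refine (hsum i q).tsum_pos (fun n => mul_nonneg (by positivity) (cnt_nonneg _ _ _ _)) k ?_
    exact mul_pos (by positivity) (lt_of_lt_of_le one_pos (one_le_cnt p q (by simp)))
  · intro i q
    have h3 : Lop A φ (fun i q => ∑' n, (l⁻¹) ^ n * cnt A φ n o i q) i q
        = ∑' n, (l⁻¹) ^ n * cnt A φ (n + 1) o i q := by
      simp only [cnt_succ]
      unfold Lop
      simp only [Finset.mul_sum]
      rw [Summable.tsum_finsetSum]
      · refine Finset.sum_congr rfl fun j _ => ?_
        split_ifs <;> simp
      · intro j _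
        split_ifs
        · exact hsum _ _
        · simp
    rw [h3]
    dsimp only
    rw [(hsum i q).tsum_eq_zero_add, mul_add, ← tsum_mul_left]
    have h4 : ∀ n : ℕ, l * (l⁻¹ ^ (n + 1) * cnt A φ (n + 1) o i q)
        = (l⁻¹) ^ n * cnt A φ (n + 1) o i q := by
      intro n; rw [pow_succ]; field_simp
    simp only [h4]
    have := cnt_nonneg (A := A) (φ := φ) 0 o i q
    have : 0 ≤ l * (l⁻¹ ^ 0 * cnt A φ 0 o i q) := by positivity
    linarith

/-- Bounded real sequences converge along an ultrafilter. -/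
lemma exists_ulim (x : ℕ → ℝ) (C : ℝ) (h : ∀ n, |x n| ≤ C) :
    ∃ a, Tendsto x (hyperfilter ℕ : Filter ℕ) (nhds a) := by
  have hK : IsCompact (Set.Icc (-C) C) := isCompact_Icc
  obtain ⟨a, -, ha⟩ := hK.ultrafilter_le_nhds' ((hyperfilter ℕ).map x) (by
    rw [Ultrafilter.mem_map]
    exact Filter.univ_mem' fun n => abs_le.1 (h n))
  exact ⟨a, ha⟩

/-- Superharmonic function at the critical value. -/
lemma exists_super_crit (o : S) (hirr : ∀ i j g, ∃ n, 0 < n ∧ Pth A φ n i j g) {l : ℝ}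
    (hl : 0 < l)
    (hb : ∀ b : ℝ, l < b → ∀ᶠ n : ℕ in atTop, cnt A φ n o o (1 : K) ≤ b ^ n) :
    ∃ h : S → K → ℝ, (∀ i q, 0 < h i q) ∧ ∀ i q, Lop A φ h i q ≤ l * h i q := by
  have hpos : ∀ n : ℕ, (0 : ℝ) < 1 / ((n : ℝ) + 1) := fun n => by positivity
  have key : ∀ n : ℕ, ∃ h : S → K → ℝ, (∀ i q, 0 < h i q) ∧
      ∀ i q, Lop A φ h i q ≤ (l + 1 / ((n : ℝ) + 1)) * h i q := by
    intro n
    have := hpos n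
    refine exists_super o hirr (by linarith) ⟨l + (1 / ((n : ℝ) + 1)) / 2, by linarith, by linarith,
      hb _ (by linarith)⟩
  choose h h0 hs using key
  set a : ℕ → S → K → ℝ := fun n i q => Real.log (h n i q) - Real.log (h n o 1) with ha
  have hln : ∀ n : ℕ, l + 1 / ((n : ℝ) + 1) ≤ l + 1 := by
    intro n
    have : 1 / ((n : ℝ) + 1) ≤ 1 := by
      rw [div_le_one (by positivity)]; linarith [Nat.cast_nonneg (α := ℝ) n]
    linarith
  have hbd : ∀ i q, ∃ C, ∀ n, |a n i q| ≤ C := by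
    intro i q
    obtain ⟨k, -, p⟩ := hirr o i q
    obtain ⟨m, -, p'⟩ := hirr i o q⁻¹
    refine ⟨max (Real.log ((l + 1) ^ k)) (Real.log ((l + 1) ^ m)), fun n => ?_⟩
    have hn := hpos n
    have h1 := harnack (fun i q => (h0 n i q).le) (by linarith) (hs n) p 1
    have h2 := harnack (fun i q => (h0 n i q).le) (by linarith) (hs n) p' q
    rw [one_mul] at h1
    rw [mul_inv_cancel] at h2
    have e1 : h n i q ≤ (l + 1) ^ k * h n o 1 := h1.trans
      (mul_le_mul_of_nonneg_right (pow_le_pow_left₀ (by linarith) (hln n) _) (h0 n _ _).le)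
    have e2 : h n o 1 ≤ (l + 1) ^ m * h n i q := h2.trans
      (mul_le_mul_of_nonneg_right (pow_le_pow_left₀ (by linarith) (hln n) _) (h0 n _ _).le)
    have f1 := Real.log_le_log (h0 n _ _) e1
    have f2 := Real.log_le_log (h0 n _ _) e2
    rw [Real.log_mul (by positivity) (h0 n _ _).ne'] at f1 f2
    have m1 := le_max_left (Real.log ((l + 1) ^ k)) (Real.log ((l + 1) ^ m))
    have m2 := le_max_right (Real.log ((l + 1) ^ k)) (Real.log ((l + 1) ^ m))
    rw [abs_le]
    constructor <;> simp only [ha] <;> linarith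
  have hlim : ∀ i q, ∃ b, Tendsto (fun n => a n i q) (hyperfilter ℕ : Filter ℕ) (nhds b) := by
    intro i q
    obtain ⟨C, hC⟩ := hbd i q
    exact exists_ulim _ C hC
  choose b hb' using hlim
  refine ⟨fun i q => Real.exp (b i q), fun i q => Real.exp_pos _, fun i q => ?_⟩
  have hexp : ∀ n i q, Real.exp (a n i q) = h n i q / h n o 1 := by
    intro n i q
    simp only [ha]
    rw [Real.exp_sub, Real.exp_log (h0 _ _ _), Real.exp_log (h0 _ _ _)]
  have hc : ∀ n, Lop A φ (fun i q => Real.exp (a n i q)) i q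
      ≤ (l + 1 / ((n : ℝ) + 1)) * Real.exp (a n i q) := by
    intro n
    have h1 : Lop A φ (fun i q => Real.exp (a n i q)) i q = Lop A φ (h n) i q / h n o 1 := by
      unfold Lop
      rw [Finset.sum_div]
      refine Finset.sum_congr rfl fun j _ => ?_
      split_ifs
      · exact hexp _ _ _
      · simp
    rw [h1, hexp, ← mul_div_assoc]
    exact div_le_div_of_nonneg_right (hs n i q) (h0 _ _ _).le
  have t1 : Tendsto (fun n => Lop A φ (fun i q => Real.exp (a n i q)) i q)
      (hyperfilter ℕ : Filter ℕ) (nhds (Lop A φ (fun i q => Real.exp (b i q)) i q)) := by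
    unfold Lop
    refine tendsto_finsetSum _ fun j _ => ?_
    split_ifs
    · exact (Real.continuous_exp.tendsto _).comp (hb' _ _)
    · exact tendsto_const_nhds
  have t2 : Tendsto (fun n : ℕ => (l + 1 / ((n : ℝ) + 1)) * Real.exp (a n i q))
      (hyperfilter ℕ : Filter ℕ) (nhds (l * Real.exp (b i q))) := by
    refine Tendsto.mul ?_ ((Real.continuous_exp.tendsto _).comp (hb' _ _))
    have : Tendsto (fun n : ℕ => l + 1 / ((n : ℝ) + 1)) atTop (nhds (l + 0)) :=
      tendsto_const_nhds.add tendsto_one_div_add_atTop_nhds_zero_nat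
    rw [add_zero] at this
    exact this.mono_left Nat.hyperfilter_le_atTop
  exact le_of_tendsto_of_tendsto' t1 t2 hc

end paths
section means

lemma exists_Lim : ∃ Λ : (ℕ → ℝ) →ₗ[ℝ] ℝ, ∀ x a,
    Tendsto x (hyperfilter ℕ : Filter ℕ) (nhds a) → Λ x = a := by
  let V : Submodule ℝ (ℕ → ℝ) :=
    { carrier := {x | ∃ a, Tendsto x (hyperfilter ℕ : Filter ℕ) (nhds a)}
      add_mem' := by
        rintro x y ⟨a, ha⟩ ⟨b, hb⟩
        exact ⟨a + b, ha.add hb⟩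
      zero_mem' := ⟨0, tendsto_const_nhds⟩
      smul_mem' := by
        rintro c x ⟨a, ha⟩
        exact ⟨c * a, ha.const_mul c⟩ }
  have hV : ∀ x : V, ∃ a, Tendsto x.1 (hyperfilter ℕ : Filter ℕ) (nhds a) := fun x => x.2
  choose f hf using hV
  let m : V →ₗ[ℝ] ℝ :=
    { toFun := f
      map_add' := fun x y => tendsto_nhds_unique (hf (x + y)) ((hf x).add (hf y))
      map_smul' := fun c x => tendsto_nhds_unique (hf (c • x)) ((hf x).const_mul c) }
  obtain ⟨Λ, hΛ⟩ := LinearMap.exists_extend m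
  refine ⟨Λ, fun x a hx => ?_⟩
  have h1 : Λ x = m ⟨x, a, hx⟩ := by rw [← hΛ]; rfl
  rw [h1]
  exact tendsto_nhds_unique (hf ⟨x, a, hx⟩) hx

/-- Averaging operator. -/
lemma exists_avg {Q : Type*} [CommGroup Q] (g : Q) : ∃ C : (Q → ℝ) →ₗ[ℝ] (Q → ℝ),
    (∀ x h, C (fun q => x (q * h)) = fun q => C x (q * h)) ∧
    (∀ x a b, (∀ q, a ≤ x q ∧ x q ≤ b) → (∀ q, a ≤ C x q ∧ C x q ≤ b) ∧
      (∀ q, C x (q * g) = C x q) ∧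
      ∀ h, (∀ q, x (q * h) = x q) → ∀ q, C x (q * h) = C x q) := by
  obtain ⟨Λ, hΛ⟩ := exists_Lim
  let av : (Q → ℝ) → Q → ℕ → ℝ := fun x q n =>
    (1 / ((n : ℝ) + 1)) * ∑ k ∈ Finset.range (n + 1), x (q * g ^ k)
  refine ⟨{ toFun := fun x q => Λ (av x q), map_add' := ?_, map_smul' := ?_ }, ?_, ?_⟩
  · intro x y
    funext q
    show Λ _ = Λ _ + Λ _
    rw [← map_add]
    congr 1
    funext n
    simp only [av, Pi.add_apply, Finset.sum_add_distrib]
    ring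
  · intro c x
    funext q
    show Λ _ = c * Λ _
    rw [← smul_eq_mul, ← map_smul]
    congr 1
    funext n
    simp only [av, Pi.smul_apply, smul_eq_mul, ← Finset.mul_sum]
    ring
  · intro x h
    funext q
    show Λ _ = Λ _
    congr 1
    funext n
    simp only [av]
    congr 1
    refine Finset.sum_congr rfl fun k _ => ?_
    rw [mul_right_comm]
  · intro x a b hx
    have hab : ∀ q n, a ≤ av x q n ∧ av x q n ≤ b := by
      intro q n
      have h1 : ∑ k ∈ Finset.range (n + 1), x (q * g ^ k) ≤ ∑ k ∈ Finset.range (n + 1), b :=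
        Finset.sum_le_sum fun k _ => (hx _).2
      have h2 : ∑ k ∈ Finset.range (n + 1), a ≤ ∑ k ∈ Finset.range (n + 1), x (q * g ^ k) :=
        Finset.sum_le_sum fun k _ => (hx _).1
      simp only [Finset.sum_const, Finset.card_range, nsmul_eq_mul, Nat.cast_add,
        Nat.cast_one] at h1 h2
      have hn : (0 : ℝ) < (n : ℝ) + 1 := by positivity
      simp only [av]
      rw [one_div, inv_mul_eq_div, le_div_iff₀ hn, div_le_iff₀ hn]
      constructor <;> linarith
    have hlim : ∀ q, ∃ c, Tendsto (av x q) (hyperfilter ℕ : Filter ℕ) (nhds c) := by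
      intro q
      refine exists_ulim _ (max |a| |b|) fun n => ?_
      exact abs_le_max_abs_abs (hab q n).1 (hab q n).2
    refine ⟨?_, ?_, ?_⟩
    · intro q
      obtain ⟨c, hc⟩ := hlim q
      show a ≤ Λ _ ∧ Λ _ ≤ b
      rw [hΛ _ _ hc]
      exact ⟨ge_of_tendsto' hc fun n => (hab q n).1, le_of_tendsto' hc fun n => (hab q n).2⟩
    · intro q
      show Λ _ = Λ _
      rw [← sub_eq_zero, ← map_sub]
      apply hΛ
      have hb : Tendsto (fun n : ℕ => (1 / ((n : ℝ) + 1)) * (b - a)) atTop (nhds (0 * (b - a))) :=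
        tendsto_one_div_add_atTop_nhds_zero_nat.mul_const _
      rw [zero_mul] at hb
      refine squeeze_zero_norm (fun n => ?_) (hb.mono_left Nat.hyperfilter_le_atTop)
      have : (av x (q * g) - av x q) n
          = (1 / ((n : ℝ) + 1)) * (x (q * g ^ (n + 1)) - x q) := by
        simp only [av, Pi.sub_apply]
        rw [← mul_sub]
        congr 1
        have e1 := Finset.sum_range_succ (fun k => x (q * g ^ k)) (n + 1)
        have e2 := Finset.sum_range_succ' (fun k => x (q * g ^ k)) (n + 1)
        have e3 : ∀ k, q * g * g ^ k = q * g ^ (k + 1) := by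
          intro k; rw [pow_succ']; group
        simp only [e3]
        simp only [pow_zero, mul_one] at e2
        linarith
      rw [this, norm_mul, Real.norm_of_nonneg (by positivity)]
      refine mul_le_mul_of_nonneg_left ?_ (by positivity)
      rw [Real.norm_eq_abs, abs_le]
      have := hx (q * g ^ (n + 1))
      have := hx q
      constructor <;> linarith
    · intro h hh q
      show Λ _ = Λ _
      congr 1
      funext n
      simp only [av]
      congr 1
      refine Finset.sum_congr rfl fun k _ => ?_
      rw [mul_right_comm, hh]

lemma exists_avg_list {Q : Type*} [CommGroup Q] (l : List Q) : ∃ C : (Q → ℝ) →ₗ[ℝ] (Q → ℝ),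
    (∀ x h, C (fun q => x (q * h)) = fun q => C x (q * h)) ∧
    (∀ x a b, (∀ q, a ≤ x q ∧ x q ≤ b) → (∀ q, a ≤ C x q ∧ C x q ≤ b) ∧
      (∀ g ∈ l, ∀ q, C x (q * g) = C x q)) := by
  induction l with
  | nil => exact ⟨LinearMap.id, fun x h => rfl, fun x a b h => ⟨h, by simp⟩⟩
  | cons g l ih =>
    obtain ⟨C, hC0, hC⟩ := ih
    obtain ⟨D, hD0, hD⟩ := exists_avg g
    refine ⟨D.comp C, fun x h => by simp only [LinearMap.comp_apply, hC0, hD0], fun x a b h => ?_⟩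
    obtain ⟨h1, h2⟩ := hC x a b h
    obtain ⟨h3, h4, h5⟩ := hD (C x) a b h1
    refine ⟨h3, fun g' hg' => ?_⟩
    rcases List.mem_cons.1 hg' with rfl | hg'
    · exact h4
    · exact h5 g' (h2 g' hg')

/-- A mean, in usable form. -/
def IsMean {Q : Type*} [Group Q] (m : (Q → ℝ) →ₗ[ℝ] ℝ) : Prop :=
  ∀ x : Q → ℝ, ∀ a b, (∀ q, a ≤ x q ∧ x q ≤ b) → (a ≤ m x ∧ m x ≤ b) ∧
    ∀ g, m (fun q => x (q * g)) = m x

lemma exists_mean {Q : Type*} [CommGroup Q] (l : List Q)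
    (hl : ∀ H : Subgroup Q, (∀ g ∈ l, g ∈ H) → H = ⊤) :
    ∃ m : (Q → ℝ) →ₗ[ℝ] ℝ, IsMean m := by
  obtain ⟨C, hC0, hC⟩ := exists_avg_list l
  have hinv : ∀ x a b, (∀ q, a ≤ x q ∧ x q ≤ b) → ∀ g q, C x (q * g) = C x q := by
    intro x a b h
    let H : Subgroup Q :=
      { carrier := {g | ∀ q, C x (q * g) = C x q}
        one_mem' := by intro q; simp
        mul_mem' := by
          intro g g' h1 h2 q
          rw [← mul_assoc, h2, h1]
        inv_mem' := by
          intro g h1 q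
          have := h1 (q * g⁻¹)
          rw [inv_mul_cancel_right] at this
          exact this.symm }
    have hH := hl H (hC x a b h).2
    intro g
    have : g ∈ H := by rw [hH]; trivial
    exact this
  refine ⟨(LinearMap.proj 1).comp C, fun x a b h => ⟨(hC x a b h).1 1, fun g => ?_⟩⟩
  show C _ 1 = C _ 1
  rw [hC0]
  exact hinv x a b h g 1

end means
section expo
variable {S : Type*} [Fintype S] {K : Type*} [Group K] {A : S → S → Bool} {φ : S → S → K}

/-- From a superharmonic function to an exponential one. -/
lemma exists_expo (o : S) (hirr : ∀ i j g, ∃ n, 0 < n ∧ Pth A φ n i j g) {l : ℝ}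
    (hl : 0 < l) (m : (K → ℝ) →ₗ[ℝ] ℝ) (hm : IsMean m)
    (h : S → K → ℝ) (h0 : ∀ i q, 0 < h i q) (hs : ∀ i q, Lop A φ h i q ≤ l * h i q) :
    ∃ (χ : K → ℝ) (u : S → ℝ), (∀ g, 0 < χ g) ∧ (∀ g g', χ (g * g') = χ g * χ g') ∧
      (∀ i, 0 < u i) ∧
      ∀ i, (∑ j, if A i j = true then χ (φ i j) * u j else 0) ≤ l * u i := by
  set t : S → K → ℝ := fun i q => Real.log (h i q) with ht
  have up : ∀ i j g, ∃ C, ∀ q, t j (q * g) - t i q ≤ C := by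
    intro i j g
    obtain ⟨n, -, p⟩ := hirr i j g
    refine ⟨Real.log (l ^ n), fun q => ?_⟩
    have h1 := Real.log_le_log (h0 _ _) (harnack (fun i q => (h0 i q).le) hl.le hs p q)
    rw [Real.log_mul (by positivity) (h0 _ _).ne'] at h1
    simp only [ht]
    linarith
  have bd : ∀ i j g, ∃ a b, ∀ q, a ≤ t j (q * g) - t i q ∧ t j (q * g) - t i q ≤ b := by
    intro i j g
    obtain ⟨b, hb⟩ := up i j g
    obtain ⟨a, ha⟩ := up j i g⁻¹
    refine ⟨-a, b, fun q => ⟨?_, hb q⟩⟩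
    have := ha (q * g)
    rw [mul_inv_cancel_right] at this
    linarith
  have inv : ∀ i j g g', m (fun q => t j (q * g' * g) - t i (q * g')) =
      m (fun q => t j (q * g) - t i q) := by
    intro i j g g'
    obtain ⟨a, b, hab⟩ := bd i j g
    exact (hm _ a b hab).2 g'
  have inv1 : ∀ i j g', m (fun q => t j (q * g') - t i (q * g')) =
      m (fun q => t j q - t i q) := by
    intro i j g'
    simpa using inv i j 1 g'
  refine ⟨fun g => Real.exp (m fun q => t o (q * g) - t o q),
    fun i => Real.exp (m fun q => t i q - t o q), fun g => Real.exp_pos _, ?_,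
    fun i => Real.exp_pos _, ?_⟩
  · intro g g'
    dsimp only
    rw [← Real.exp_add, ← inv o o g' g, ← map_add]
    congr 2
    funext q
    simp only [Pi.add_apply, mul_assoc]
    ring
  · intro i
    have hpt : ∀ j, Real.exp (m fun q => t o (q * φ i j) - t o q) *
        Real.exp (m fun q => t j q - t o q) =
        Real.exp (m fun q => t j (q * φ i j) - t i q) * Real.exp (m fun q => t i q - t o q) := by
      intro j
      rw [← Real.exp_add, ← Real.exp_add, ← inv1 o j (φ i j), ← map_add, ← map_add]
      congr 2
      funext q
      simp only [Pi.add_apply]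
      ring
    have e1 : (∑ j, if A i j = true then Real.exp (m fun q => t o (q * φ i j) - t o q) *
        Real.exp (m fun q => t j q - t o q) else 0) =
        (∑ j, if A i j = true then Real.exp (m fun q => t j (q * φ i j) - t i q) else 0) *
          Real.exp (m fun q => t i q - t o q) := by
      rw [Finset.sum_mul]
      refine Finset.sum_congr rfl fun j _ => ?_
      split_ifs
      · exact hpt j
      · simp
    rw [e1]
    refine mul_le_mul_of_nonneg_right ?_ (Real.exp_pos _).le
    -- Jensen
    set c : S → ℝ := fun j => m fun q => t j (q * φ i j) - t i q with hc
    let y : K → ℝ := ∑ j, if A i j = true then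
      (Real.exp (c j)) • ((fun q => t j (q * φ i j) - t i q) + (fun _ => 1 - c j)) else 0
    have hconst : ∀ r : ℝ, m (fun _ => r) = r := by
      intro r
      have := (hm (fun _ => r) r r (fun _ => ⟨le_rfl, le_rfl⟩)).1
      exact le_antisymm this.2 this.1
    have hmy : m y = ∑ j, if A i j = true then Real.exp (c j) else 0 := by
      simp only [y]
      rw [map_sum]
      refine Finset.sum_congr rfl fun j _ => ?_
      split_ifs
      · rw [map_smul, map_add, hconst]
        simp only [hc, smul_eq_mul]
        ring
      · exact map_zero m
    have hyl : ∀ q, y q ≤ l := by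
      intro q
      have h1 : Lop A φ h i q / h i q ≤ l := by
        rw [div_le_iff₀ (h0 _ _)]; exact hs i q
      refine le_trans ?_ h1
      unfold Lop
      simp only [y]
      rw [Finset.sum_apply, Finset.sum_div]
      refine Finset.sum_le_sum fun j _ => ?_
      split_ifs
      · have e2 : h j (q * φ i j) / h i q = Real.exp (t j (q * φ i j) - t i q) := by
          rw [Real.exp_sub]
          simp only [ht]
          rw [Real.exp_log (h0 _ _), Real.exp_log (h0 _ _)]
        rw [e2]
        simp only [Pi.smul_apply, Pi.add_apply, smul_eq_mul]
        have := Real.add_one_le_exp (t j (q * φ i j) - t i q - c j)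
        calc _ ≤ Real.exp (c j) * Real.exp (t j (q * φ i j) - t i q - c j) :=
              mul_le_mul_of_nonneg_left (by linarith) (Real.exp_pos _).le
          _ = _ := by rw [← Real.exp_add]; congr 1; ring
      · simp
    have hyb : ∃ a, ∀ q, a ≤ y q := by
      have : ∀ j, ∃ a, ∀ q, a ≤ (if A i j = true then
          (Real.exp (c j)) • ((fun q => t j (q * φ i j) - t i q) + (fun _ => 1 - c j)) else 0 :
          K → ℝ) q := by
        intro j
        split_ifs
        · obtain ⟨a, b, hab⟩ := bd i j (φ i j)
          refine ⟨Real.exp (c j) * (a + (1 - c j)), fun q => ?_⟩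
          simp only [Pi.smul_apply, Pi.add_apply, smul_eq_mul]
          exact mul_le_mul_of_nonneg_left (by linarith [(hab q).1]) (Real.exp_pos _).le
        · exact ⟨0, fun q => le_rfl⟩
      choose a ha using this
      refine ⟨∑ j, a j, fun q => ?_⟩
      simp only [y]
      rw [Finset.sum_apply]
      exact Finset.sum_le_sum fun j _ => ha j q
    obtain ⟨a, ha⟩ := hyb
    rw [← hmy]
    exact (hm y a l fun q => ⟨ha q, hyl q⟩).1.2

/-- Excessive measure for a substochastic matrix with positive entries along edges. -/
lemma exists_excessive [Nonempty S] (p : S → S → ℝ) (hp : ∀ i j, 0 ≤ p i j)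
    (hrow : ∀ i, ∑ j, p i j ≤ 1)
    (hirr : ∀ i j g, ∃ n, 0 < n ∧ Pth A φ n i j g) (hpA : ∀ i j, A i j = true → 0 < p i j) :
    ∃ w : S → ℝ, (∀ i, 0 < w i) ∧ ∀ j, ∑ i, w i * p i j ≤ w j := by
  classical
  set P : Matrix S S ℝ := fun i j => p i j + if i = j then 1 - ∑ k, p i k else 0 with hP
  have hP0 : ∀ i j, 0 ≤ P i j := by
    intro i j
    simp only [hP]
    have := hrow i
    split_ifs
    · exact add_nonneg (hp _ _) (by linarith)
    · simpa using hp i j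
  have hP1 : ∀ i, ∑ j, P i j = 1 := by
    intro i
    simp only [hP]
    rw [Finset.sum_add_distrib]
    simp
  have hpP : ∀ i j, p i j ≤ P i j := by
    intro i j
    simp only [hP]
    have := hrow i
    split_ifs <;> linarith
  have hdet : (P - 1).det = 0 := by
    rw [← Matrix.exists_mulVec_eq_zero_iff]
    refine ⟨fun _ => 1, ?_, ?_⟩
    · intro h
      have := congrFun h (Classical.arbitrary S)
      simp at this
    · rw [Matrix.sub_mulVec, Matrix.one_mulVec, sub_eq_zero]
      funext i
      simp [Matrix.mulVec, dotProduct, hP1]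
  obtain ⟨w, hw0, hw⟩ := Matrix.exists_vecMul_eq_zero_iff.2 hdet
  rw [Matrix.vecMul_sub, Matrix.vecMul_one, sub_eq_zero] at hw
  have hw' : ∀ j, ∑ i, w i * P i j = w j := fun j => congrFun hw j
  have hle : ∀ j, |w j| ≤ ∑ i, |w i| * P i j := by
    intro j
    rw [← hw' j]
    refine (Finset.abs_sum_le_sum_abs _ _).trans (Finset.sum_le_sum fun i _ => ?_)
    rw [abs_mul, abs_of_nonneg (hP0 i j)]
  have hsum : ∑ j, ∑ i, |w i| * P i j = ∑ j, |w j| := by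
    rw [Finset.sum_comm]
    refine Finset.sum_congr rfl fun i _ => ?_
    rw [← Finset.mul_sum, hP1, mul_one]
  have heq : ∀ j, ∑ i, |w i| * P i j = |w j| := by
    have := (Finset.sum_eq_sum_iff_of_le (s := Finset.univ) (fun j _ => hle j)).1 hsum.symm
    intro j
    exact (this j (Finset.mem_univ j)).symm
  have hex : ∀ j, ∑ i, |w i| * p i j ≤ |w j| := by
    intro j
    rw [← heq j]
    exact Finset.sum_le_sum fun i _ => mul_le_mul_of_nonneg_left (hpP i j) (abs_nonneg _)
  refine ⟨fun i => |w i|, ?_, hex⟩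
  obtain ⟨i0, hi0⟩ : ∃ i, w i ≠ 0 := by
    by_contra hcon
    push Not at hcon
    exact hw0 (funext hcon)
  have hstep : ∀ n i j g, Pth A φ n i j g → 0 < |w i| → 0 < |w j| := by
    intro n i j g q
    induction q with
    | nil i => exact id
    | @cons n i k j g ha _ ih =>
      intro hi
      apply ih
      refine lt_of_lt_of_le (mul_pos hi (hpA i k ha)) ((?_ : _ ≤ _).trans (hex k))
      exact Finset.single_le_sum (f := fun i => |w i| * p i k)
        (fun i _ => mul_nonneg (abs_nonneg _) (hp i k)) (Finset.mem_univ i)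
  intro j
  obtain ⟨n, -, q⟩ := hirr i0 j 1
  exact hstep n i0 j 1 q (abs_pos.2 hi0)

end expo
section hilbert
variable {S : Type*} [Fintype S] {H : Type*} [NormedAddCommGroup H] [InnerProductSpace ℝ H]

/-- Weighted square norm. -/
noncomputable def nsq (w : S → ℝ) (f : S → H) : ℝ := ∑ i, w i * ‖f i‖ ^ 2

/-- Dirichlet form. -/
noncomputable def dir (w : S → ℝ) (p : S → S → ℝ) (R : S → S → H →ₗᵢ[ℝ] H) (f : S → H) : ℝ :=
  ∑ i, ∑ j, w i * p i j * ‖f i - R i j (f j)‖ ^ 2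

/-- Markov operator. -/
noncomputable def Pop (p : S → S → ℝ) (R : S → S → H →ₗᵢ[ℝ] H) : Module.End ℝ (S → H) where
  toFun f := fun i => ∑ j, p i j • R i j (f j)
  map_add' f g := by
    funext i
    simp [Finset.sum_add_distrib]
  map_smul' c f := by
    funext i
    simp [Finset.smul_sum, smul_smul, mul_comm]

variable {w : S → ℝ} {p : S → S → ℝ} {R : S → S → H →ₗᵢ[ℝ] H}

lemma gap (hw : ∀ i, 0 < w i) (hp : ∀ i j, 0 ≤ p i j) (hrow : ∀ i, ∑ j, p i j ≤ 1)
    (hcol : ∀ j, ∑ i, w i * p i j ≤ w j) (f : S → H) :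
    nsq w (f + Pop p R f) ≤ 4 * nsq w f - dir w p R f := by
  have hpt : ∀ i, ‖Pop p R f i‖ ^ 2 ≤ ∑ j, p i j * ‖f j‖ ^ 2 := by
    intro i
    have h1 : ‖Pop p R f i‖ ≤ ∑ j, p i j * ‖f j‖ := by
      refine (norm_sum_le _ _).trans (le_of_eq (Finset.sum_congr rfl fun j _ => ?_))
      rw [norm_smul, Real.norm_of_nonneg (hp i j), LinearIsometry.norm_map]
    have h2 : (∑ j, p i j * ‖f j‖) ^ 2 ≤ (∑ j, p i j) * ∑ j, p i j * ‖f j‖ ^ 2 := by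
      refine Finset.sum_sq_le_sum_mul_sum_of_sq_le_mul _ (fun j _ => hp i j)
        (fun j _ => mul_nonneg (hp i j) (sq_nonneg _)) fun j _ => le_of_eq (by ring)
    have h3 : 0 ≤ ∑ j, p i j * ‖f j‖ ^ 2 :=
      Finset.sum_nonneg fun j _ => mul_nonneg (hp i j) (sq_nonneg _)
    calc _ ≤ (∑ j, p i j * ‖f j‖) ^ 2 := pow_le_pow_left₀ (norm_nonneg _) h1 2
      _ ≤ _ := h2
      _ ≤ 1 * ∑ j, p i j * ‖f j‖ ^ 2 := mul_le_mul_of_nonneg_right (hrow i) h3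
      _ = _ := one_mul _
  have hA : ∑ i, w i * ∑ j, p i j * ‖f j‖ ^ 2 ≤ nsq w f := by
    unfold nsq
    simp only [Finset.mul_sum]
    rw [Finset.sum_comm]
    refine Finset.sum_le_sum fun j _ => ?_
    calc _ = (∑ i, w i * p i j) * ‖f j‖ ^ 2 := by
          rw [Finset.sum_mul]; exact Finset.sum_congr rfl fun i _ => by ring
      _ ≤ _ := mul_le_mul_of_nonneg_right (hcol j) (sq_nonneg _)
  have hB : ∑ i, w i * ((∑ j, p i j) * ‖f i‖ ^ 2) ≤ nsq w f := by
    unfold nsq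
    refine Finset.sum_le_sum fun i _ => mul_le_mul_of_nonneg_left ?_ (hw i).le
    calc _ ≤ 1 * ‖f i‖ ^ 2 := mul_le_mul_of_nonneg_right (hrow i) (sq_nonneg _)
      _ = _ := one_mul _
  have hin : ∀ i, 2 * inner ℝ (f i) (Pop p R f i) =
      (∑ j, p i j) * ‖f i‖ ^ 2 + ∑ j, p i j * ‖f j‖ ^ 2
        - ∑ j, p i j * ‖f i - R i j (f j)‖ ^ 2 := by
    intro i
    show 2 * inner ℝ (f i) (∑ j, p i j • R i j (f j)) = _
    rw [inner_sum, Finset.mul_sum, Finset.sum_mul, ← Finset.sum_add_distrib,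
      ← Finset.sum_sub_distrib]
    refine Finset.sum_congr rfl fun j _ => ?_
    rw [norm_sub_sq_real, LinearIsometry.norm_map, inner_smul_right]
    ring
  have hfin : nsq w (f + Pop p R f) = nsq w f + (∑ i, w i * ((∑ j, p i j) * ‖f i‖ ^ 2)
      + ∑ i, w i * ∑ j, p i j * ‖f j‖ ^ 2 - dir w p R f) + ∑ i, w i * ‖Pop p R f i‖ ^ 2 := by
    unfold nsq dir
    rw [← Finset.sum_add_distrib, ← Finset.sum_sub_distrib, ← Finset.sum_add_distrib,
      ← Finset.sum_add_distrib]
    refine Finset.sum_congr rfl fun i _ => ?_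
    rw [Pi.add_apply, norm_add_sq_real, hin i]
    have : ∑ j, w i * p i j * ‖f i - R i j (f j)‖ ^ 2
        = w i * ∑ j, p i j * ‖f i - R i j (f j)‖ ^ 2 := by
      rw [Finset.mul_sum]; exact Finset.sum_congr rfl fun j _ => by ring
    rw [this]
    ring
  have hC : ∑ i, w i * ‖Pop p R f i‖ ^ 2 ≤ nsq w f :=
    (Finset.sum_le_sum fun i _ => mul_le_mul_of_nonneg_left (hpt i) (hw i).le).trans hA
  rw [hfin]
  linarith

lemma nsq_pow {r : ℝ} (hr : 0 ≤ r)
    (h : ∀ f : S → H, nsq w (f + Pop p R f) ≤ 4 * r * nsq w f) (n : ℕ) (f : S → H) :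
    nsq w (((1 + Pop p R) ^ n) f) ≤ (4 * r) ^ n * nsq w f := by
  induction n with
  | zero => simp
  | succ n ih =>
    rw [pow_succ', Module.End.mul_apply]
    refine (h _).trans ?_
    rw [pow_succ' (4 * r), mul_assoc (4 * r)]
    exact mul_le_mul_of_nonneg_left ih (by positivity)

end hilbert

section ell2
variable {G : Type*} [Group G]

/-- `ℓ²(G)`. -/
abbrev E2 (G : Type*) := lp (fun _ : G => ℝ) 2

/-- Right translation on `ℓ²(G)`. -/
noncomputable def Rt (g : G) : E2 G →ₗᵢ[ℝ] E2 G where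
  toFun f := ⟨fun h => f (h * g), by
    have := lp.memℓp f
    show Memℓp (fun h => f (h * g)) 2
    rw [memℓp_gen_iff (by norm_num)] at this ⊢
    exact (Equiv.mulRight g).summable_iff.2 this⟩
  map_add' f f' := rfl
  map_smul' c f := rfl
  norm_map' f := by
    rw [lp.norm_eq_tsum_rpow (by norm_num), lp.norm_eq_tsum_rpow (by norm_num)]
    congr 1
    exact (Equiv.mulRight g).tsum_eq (fun h => ‖f h‖ ^ (2 : ENNReal).toReal)

lemma Rt_apply (g h : G) (f : E2 G) : Rt g f h = f (h * g) := rfl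

lemma Rt_one (f : E2 G) : Rt 1 f = f := by
  ext h; simp [Rt_apply]

lemma Rt_mul (g g' : G) (f : E2 G) : Rt (g * g') f = Rt g (Rt g' f) := by
  ext h; simp [Rt_apply, mul_assoc]

lemma summable_sq {G : Type*} (v : E2 G) : Summable fun g => v g ^ 2 := by
  have := lp.memℓp v
  rw [memℓp_gen_iff (by norm_num)] at this
  simpa using this

lemma norm_sq_tsum {G : Type*} (v : E2 G) : ‖v‖ ^ 2 = ∑' g, v g ^ 2 := by
  have := lp.norm_rpow_eq_tsum (p := 2) (by norm_num) v
  simpa using this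

/-- Multiplication by a bounded function. -/
lemma exists_mul (x : G → ℝ) (C : ℝ) (hx : ∀ g, |x g| ≤ C) (v : E2 G) :
    ∃ y : E2 G, (∀ g, y g = x g * v g) ∧ ‖y‖ ≤ C * ‖v‖ := by
  have hC : 0 ≤ C := (abs_nonneg _).trans (hx 1)
  have hle : ∀ g, (x g * v g) ^ 2 ≤ C ^ 2 * v g ^ 2 := by
    intro g
    rw [mul_pow]
    exact mul_le_mul_of_nonneg_right (sq_le_sq' (abs_le.1 (hx g)).1 (abs_le.1 (hx g)).2)
      (sq_nonneg _)
  have hs : Summable fun g => (x g * v g) ^ 2 :=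
    Summable.of_nonneg_of_le (fun g => sq_nonneg _) hle ((summable_sq v).mul_left _)
  let y : E2 G := ⟨fun g => x g * v g, by
    show Memℓp (fun g => x g * v g) 2
    rw [memℓp_gen_iff (by norm_num)]
    simpa [mul_pow] using hs⟩
  refine ⟨y, fun g => rfl, ?_⟩
  refine le_of_sq_le_sq ?_ (by positivity)
  rw [mul_pow, norm_sq_tsum, norm_sq_tsum, ← tsum_mul_left]
  exact hs.tsum_le_tsum hle ((summable_sq v).mul_left _)

/-- Almost invariant unit vectors give a mean. -/
lemma amenable_of_vectors (v : ℕ → E2 G) (hv : ∀ n, ‖v n‖ = 1)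
    (hinv : ∀ g, Tendsto (fun n => ‖Rt g (v n) - v n‖) atTop (nhds 0)) : Amenable G := by
  obtain ⟨Λ, hΛ⟩ := exists_Lim
  let B : Submodule ℝ (G → ℝ) :=
    { carrier := {x | ∃ C, ∀ g, |x g| ≤ C}
      add_mem' := by
        rintro x y ⟨a, ha⟩ ⟨b, hb⟩
        exact ⟨a + b, fun g => (abs_add_le _ _).trans (add_le_add (ha g) (hb g))⟩
      zero_mem' := ⟨0, by simp⟩
      smul_mem' := by
        rintro c x ⟨a, ha⟩
        refine ⟨|c| * a, fun g => ?_⟩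
        rw [Pi.smul_apply, smul_eq_mul, abs_mul]
        exact mul_le_mul_of_nonneg_left (ha g) (abs_nonneg _) }
  have hsm : ∀ x ∈ B, ∀ u : E2 G, Summable fun g => x g * u g ^ 2 := by
    rintro x ⟨C, hC⟩ u
    refine Summable.of_norm_bounded ((summable_sq u).mul_left C) fun g => ?_
    rw [norm_mul, Real.norm_eq_abs, Real.norm_of_nonneg (sq_nonneg _)]
    exact mul_le_mul_of_nonneg_right (hC g) (sq_nonneg _)
  let m0 : B →ₗ[ℝ] ℝ :=
    { toFun := fun x => Λ fun n => ∑' g, x.1 g * v n g ^ 2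
      map_add' := by
        intro x y
        rw [← map_add]
        congr 1
        funext n
        rw [Pi.add_apply, ← (hsm x.1 x.2 _).tsum_add (hsm y.1 y.2 _)]
        exact tsum_congr fun g => add_mul _ _ _
      map_smul' := by
        intro c x
        show _ = c • _
        rw [← map_smul]
        congr 1
        funext n
        rw [Pi.smul_apply, smul_eq_mul, ← tsum_mul_left]
        exact tsum_congr fun g => mul_assoc _ _ _ }
  obtain ⟨m, hm⟩ := LinearMap.exists_extend m0
  have hmB : ∀ x, x ∈ B → m x = Λ fun n => ∑' g, x g * v n g ^ 2 := by
    intro x hx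
    have : m x = m0 ⟨x, hx⟩ := by rw [← hm]; rfl
    rw [this]
    rfl
  refine ⟨m, fun x y => map_add m x y, fun c x => map_smul m c x, fun x hx => ?_⟩
  have hxB : ∃ C, ∀ g, |x g| ≤ C := by
    obtain ⟨C, hC⟩ := hx.exists_norm_le
    exact ⟨C, fun g => hC _ ⟨g, rfl⟩⟩
  obtain ⟨C, hC⟩ := hxB
  have hC0 : 0 ≤ C := (abs_nonneg _).trans (hC 1)
  have hba : BddAbove (Set.range x) := ⟨C, by rintro _ ⟨g, rfl⟩; exact (abs_le.1 (hC g)).2⟩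
  have hbb : BddBelow (Set.range x) := ⟨-C, by rintro _ ⟨g, rfl⟩; exact (abs_le.1 (hC g)).1⟩
  have hone : ∀ n, ∑' g, v n g ^ 2 = 1 := by
    intro n
    rw [← norm_sq_tsum, hv]
    norm_num
  refine ⟨fun h => ?_, ?_⟩
  · rw [hmB x ⟨C, hC⟩, hmB _ ⟨C, fun g => hC _⟩, ← sub_eq_zero, ← map_sub]
    apply hΛ
    have hb := (hinv h⁻¹).const_mul (2 * C)
    rw [mul_zero] at hb
    refine squeeze_zero_norm (fun n => ?_) (hb.mono_left Nat.hyperfilter_le_atTop)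
    set a := v n with ha
    set b := Rt h⁻¹ a with hb'
    have hbn : ‖b‖ = 1 := by rw [hb', LinearIsometry.norm_map]; exact hv n
    have e1 : ∑' g, x (g * h) * a g ^ 2 = ∑' g, x g * b g ^ 2 := by
      rw [← (Equiv.mulRight h).tsum_eq (fun g => x g * b g ^ 2)]
      refine tsum_congr fun g => ?_
      simp [hb', Rt_apply]
    obtain ⟨y, hy, hyn⟩ := exists_mul x C hC (b - a)
    have e2 : inner ℝ y (b + a) = ∑' g, x g * b g ^ 2 - ∑' g, x g * a g ^ 2 := by
      rw [lp.inner_eq_tsum, ← (hsm x ⟨C, hC⟩ b).tsum_sub (hsm x ⟨C, hC⟩ a)]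
      refine tsum_congr fun g => ?_
      rw [hy]
      simp
      ring
    rw [Pi.sub_apply, e1, ← e2, Real.norm_eq_abs]
    calc _ ≤ ‖y‖ * ‖b + a‖ := abs_real_inner_le_norm _ _
      _ ≤ (C * ‖b - a‖) * 2 := by
          refine mul_le_mul hyn ?_ (norm_nonneg _) (by positivity)
          refine (norm_add_le _ _).trans ?_
          rw [hbn, ha, hv]
          norm_num
      _ = _ := by ring
  · have hab : ∀ n, sInf (Set.range x) ≤ ∑' g, x g * v n g ^ 2 ∧
        ∑' g, x g * v n g ^ 2 ≤ sSup (Set.range x) := by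
      intro n
      have i1 : sInf (Set.range x) = ∑' g, sInf (Set.range x) * v n g ^ 2 := by
        rw [tsum_mul_left, hone, mul_one]
      have i2 : sSup (Set.range x) = ∑' g, sSup (Set.range x) * v n g ^ 2 := by
        rw [tsum_mul_left, hone, mul_one]
      constructor
      · rw [i1]
        exact ((summable_sq _).mul_left _).tsum_le_tsum
          (fun g => mul_le_mul_of_nonneg_right (csInf_le hbb ⟨g, rfl⟩) (sq_nonneg _))
          (hsm x ⟨C, hC⟩ _)
      · rw [i2]
        exact (hsm x ⟨C, hC⟩ _).tsum_le_tsum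
          (fun g => mul_le_mul_of_nonneg_right (le_csSup hba ⟨g, rfl⟩) (sq_nonneg _))
          ((summable_sq _).mul_left _)
    obtain ⟨c, hc⟩ := exists_ulim (fun n => ∑' g, x g * v n g ^ 2)
      (max |sInf (Set.range x)| |sSup (Set.range x)|)
      fun n => abs_le_max_abs_abs (hab n).1 (hab n).2
    rw [hmB x ⟨C, hC⟩, hΛ _ _ hc]
    exact ⟨ge_of_tendsto' hc fun n => (hab n).1, le_of_tendsto' hc fun n => (hab n).2⟩

end ell2
section bound
variable {S : Type*} [Fintype S] {G : Type*} [Group G] {A : S → S → Bool} {φ : S → S → G}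

lemma dir_nonneg {S G : Type*} [Fintype S] {w : S → ℝ} {p : S → S → ℝ} (hw : ∀ i, 0 < w i) (hp : ∀ i j, 0 ≤ p i j)
    (R : S → S → E2 G →ₗᵢ[ℝ] E2 G) (f : S → E2 G) : 0 ≤ dir w p R f :=
  Finset.sum_nonneg fun i _ => Finset.sum_nonneg fun j _ =>
    mul_nonneg (mul_nonneg (hw i).le (hp i j)) (sq_nonneg _)

lemma path_dir {w : S → ℝ} {p : S → S → ℝ} (hw : ∀ i, 0 < w i) (hp : ∀ i j, 0 ≤ p i j)
    (hpA : ∀ i j, A i j = true → 0 < p i j) {n : ℕ} {i j : S} {g : G} (q : Pth A φ n i j g) :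
    ∃ C : ℝ, 0 ≤ C ∧ ∀ f : S → E2 G, ‖f i - Rt g (f j)‖ ≤
      C * √(dir w p (fun i j => Rt (φ i j)) f) := by
  induction q with
  | nil i => exact ⟨0, le_rfl, fun f => by simp [Rt_one]⟩
  | @cons n i k j g ha _ ih =>
    obtain ⟨C, hC, h⟩ := ih
    have hpos : 0 < w i * p i k := mul_pos (hw i) (hpA i k ha)
    refine ⟨√((w i * p i k)⁻¹) + C, by positivity, fun f => ?_⟩
    set D := dir w p (fun i j => Rt (φ i j)) f with hD
    have h1 : w i * p i k * ‖f i - Rt (φ i k) (f k)‖ ^ 2 ≤ D := by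
      have a1 := Finset.single_le_sum
        (f := fun k => w i * p i k * ‖f i - Rt (φ i k) (f k)‖ ^ 2)
        (fun j _ => mul_nonneg (mul_nonneg (hw i).le (hp i j)) (sq_nonneg _)) (Finset.mem_univ k)
      have a2 := Finset.single_le_sum
        (f := fun i => ∑ k, w i * p i k * ‖f i - Rt (φ i k) (f k)‖ ^ 2)
        (fun i _ => Finset.sum_nonneg fun j _ =>
          mul_nonneg (mul_nonneg (hw i).le (hp i j)) (sq_nonneg _)) (Finset.mem_univ i)
      exact a1.trans a2
    have h2 : ‖f i - Rt (φ i k) (f k)‖ ≤ √((w i * p i k)⁻¹) * √D := by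
      rw [← Real.sqrt_mul (by positivity)]
      apply Real.le_sqrt_of_sq_le
      rw [inv_mul_eq_div, le_div_iff₀ hpos]
      linarith
    have h3 : f i - Rt (φ i k * g) (f j)
        = (f i - Rt (φ i k) (f k)) + Rt (φ i k) (f k - Rt g (f j)) := by
      rw [Rt_mul, map_sub]; abel
    rw [h3, add_mul]
    refine (norm_add_le _ _).trans (add_le_add h2 ?_)
    rw [LinearIsometry.norm_map]
    exact h f

lemma poincare (o : S) {w : S → ℝ} {p : S → S → ℝ} (hw : ∀ i, 0 < w i) (hp : ∀ i j, 0 ≤ p i j)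
    (hirr : ∀ i j g, ∃ n, 0 < n ∧ Pth A φ n i j g)
    (hpA : ∀ i j, A i j = true → 0 < p i j) (hna : ¬ Amenable G) :
    ∃ c : ℝ, 0 < c ∧ ∀ f : S → E2 G, c * nsq w f ≤ dir w p (fun i j => Rt (φ i j)) f := by
  by_contra hcon
  push Not at hcon
  apply hna
  have hpath : ∀ i j g, ∃ C : ℝ, 0 ≤ C ∧ ∀ f : S → E2 G, ‖f i - Rt g (f j)‖ ≤
      C * √(dir w p (fun i j => Rt (φ i j)) f) := by
    intro i j g
    obtain ⟨n, -, q⟩ := hirr i j g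
    exact path_dir hw hp hpA q
  choose C hC0 hC using hpath
  set M : ℝ := ∑ i, C i o 1 with hM
  have hM0 : 0 ≤ M := Finset.sum_nonneg fun i _ => hC0 _ _ _
  set W : ℝ := ∑ i, w i with hW
  have hW0 : 0 < W := Finset.sum_pos (fun i _ => hw i) ⟨o, Finset.mem_univ o⟩
  have key : ∀ n : ℕ, ∃ f : S → E2 G, 0 < ‖f o‖ ∧
      √(dir w p (fun i j => Rt (φ i j)) f) ≤ √(1 / ((n : ℝ) + 1)) * ‖f o‖ := by
    intro n
    have hn : (0 : ℝ) < (n : ℝ) + 1 := by positivity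
    obtain ⟨f, hf⟩ := hcon (1 / (4 * W * (M ^ 2 + 1) * ((n : ℝ) + 1))) (by positivity)
    set D := dir w p (fun i j => Rt (φ i j)) f with hD
    have hD0 : 0 ≤ D := dir_nonneg hw hp _ f
    have h1 : ∀ i, ‖f i‖ ^ 2 ≤ 2 * ‖f o‖ ^ 2 + 2 * M ^ 2 * D := by
      intro i
      have a1 := hC i o 1 f
      rw [Rt_one] at a1
      have a2 : C i o 1 ≤ M := Finset.single_le_sum (f := fun i => C i o 1)
        (fun i _ => hC0 _ _ _) (Finset.mem_univ i)
      have a3 : ‖f i‖ ≤ ‖f o‖ + M * √D := by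
        have : ‖f i‖ ≤ ‖f o‖ + ‖f i - f o‖ := by
          have := norm_add_le (f o) (f i - f o)
          simpa using this
        have := mul_le_mul_of_nonneg_right a2 (Real.sqrt_nonneg D)
        linarith
      have a4 := pow_le_pow_left₀ (norm_nonneg _) a3 2
      have a5 : (√D) ^ 2 = D := Real.sq_sqrt hD0
      have a6 : (‖f o‖ + M * √D) ^ 2 ≤ 2 * ‖f o‖ ^ 2 + 2 * M ^ 2 * (√D) ^ 2 := by
        nlinarith [sq_nonneg (‖f o‖ - M * √D)]
      rw [a5] at a6
      linarith
    have h2 : nsq w f ≤ W * (2 * ‖f o‖ ^ 2 + 2 * M ^ 2 * D) := by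
      unfold nsq
      rw [hW, Finset.sum_mul]
      exact Finset.sum_le_sum fun i _ => mul_le_mul_of_nonneg_left (h1 i) (hw i).le
    rw [div_mul_eq_mul_div, one_mul, lt_div_iff₀ (by positivity)] at hf
    have h3 : D * (4 * W * (M ^ 2 + 1)) ≤ D * (4 * W * (M ^ 2 + 1) * ((n : ℝ) + 1)) := by
      refine mul_le_mul_of_nonneg_left ?_ hD0
      refine le_mul_of_one_le_right (by positivity) ?_
      linarith [Nat.cast_nonneg (α := ℝ) n]
    have h4 : 0 ≤ W * D := by positivity
    have h5 : nsq w f ≤ 4 * W * ‖f o‖ ^ 2 := by nlinarith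
    have h6 : D * ((n : ℝ) + 1) ≤ ‖f o‖ ^ 2 := by
      have e1 : (4 * W) * (D * ((n : ℝ) + 1)) ≤ D * (4 * W * (M ^ 2 + 1) * ((n : ℝ) + 1)) := by
        have : 0 ≤ 4 * W * D * ((n : ℝ) + 1) * M ^ 2 := by positivity
        nlinarith
      have e2 : (4 * W) * (D * ((n : ℝ) + 1)) ≤ (4 * W) * ‖f o‖ ^ 2 := by linarith
      exact le_of_mul_le_mul_left e2 (by positivity)
    refine ⟨f, ?_, ?_⟩
    · by_contra hz
      have hz' : ‖f o‖ = 0 := le_antisymm (not_lt.1 hz) (norm_nonneg _)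
      rw [hz'] at h5
      have : 0 ≤ D * (4 * W * (M ^ 2 + 1) * ((n : ℝ) + 1)) := by positivity
      linarith
    · rw [← Real.sqrt_sq (norm_nonneg (f o)), ← Real.sqrt_mul (by positivity)]
      apply Real.sqrt_le_sqrt
      rw [one_div, inv_mul_eq_div, le_div_iff₀ hn]
      exact h6
  choose f hf0 hf using key
  refine amenable_of_vectors (fun n => (‖f n o‖⁻¹) • f n o) (fun n => ?_) (fun g => ?_)
  · rw [norm_smul, norm_inv, norm_norm, inv_mul_cancel₀ (hf0 n).ne']
  · have hb : Tendsto (fun n : ℕ => C o o g * √(1 / ((n : ℝ) + 1))) atTop (nhds (C o o g * √0)) :=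
      ((Real.continuous_sqrt.tendsto _).comp tendsto_one_div_add_atTop_nhds_zero_nat).const_mul _
    rw [Real.sqrt_zero, mul_zero] at hb
    refine squeeze_zero (fun n => norm_nonneg _) (fun n => ?_) hb
    have h1 : Rt g (‖f n o‖⁻¹ • f n o) - ‖f n o‖⁻¹ • f n o
        = (-‖f n o‖⁻¹) • (f n o - Rt g (f n o)) := by
      rw [map_smul, neg_smul, smul_sub]; abel
    rw [h1, norm_smul, norm_neg, norm_inv, norm_norm, inv_mul_eq_div, div_le_iff₀ (hf0 n)]
    refine (hC o o g (f n)).trans ?_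
    rw [mul_assoc]
    exact mul_le_mul_of_nonneg_left (hf n) (hC0 _ _ _)

lemma cnt_bound (o' : S) {l : ℝ} (hl : 0 < l)
    (hirr : ∀ i j g, ∃ n, 0 < n ∧ Pth A φ n i j g) (hna : ¬ Amenable G)
    (χ : G → ℝ) (u : S → ℝ) (hχ : ∀ g, 0 < χ g) (hχm : ∀ g g', χ (g * g') = χ g * χ g')
    (hu : ∀ i, 0 < u i)
    (hs : ∀ i, (∑ j, if A i j = true then χ (φ i j) * u j else 0) ≤ l * u i) :
    ∃ r : ℝ, 0 < r ∧ r < 1 ∧ ∀ o k, 0 < k →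
      cnt A φ k o o (1 : G) ≤ 2 * k * (l * r) ^ k := by
  classical
  have : Nonempty S := ⟨o'⟩
  set p : S → S → ℝ := fun i j => (if A i j = true then χ (φ i j) * u j else 0) / (l * u i) with hpdef
  have hden : ∀ i, 0 < l * u i := fun i => mul_pos hl (hu i)
  have hp : ∀ i j, 0 ≤ p i j := by
    intro i j
    refine div_nonneg ?_ (hden i).le
    split_ifs
    · exact (mul_pos (hχ _) (hu _)).le
    · exact le_rfl
  have hpA : ∀ i j, A i j = true → 0 < p i j := by
    intro i j h
    simp only [hpdef, h, if_true]
    exact div_pos (mul_pos (hχ _) (hu _)) (hden i)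
  have hrow : ∀ i, ∑ j, p i j ≤ 1 := by
    intro i
    simp only [hpdef]
    rw [← Finset.sum_div, div_le_one (hden i)]
    exact hs i
  obtain ⟨w, hw, hcol⟩ := exists_excessive p hp hrow hirr hpA
  obtain ⟨c0, hc0, hpo⟩ := poincare o' hw hp hirr hpA hna
  set c := min c0 1 with hc
  have hc1 : 0 < c := lt_min hc0 one_pos
  have hc2 : c ≤ 1 := min_le_right _ _
  set R : S → S → E2 G →ₗᵢ[ℝ] E2 G := fun i j => Rt (φ i j) with hR
  have hns : ∀ f : S → E2 G, 0 ≤ nsq w f := fun f =>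
    Finset.sum_nonneg fun i _ => mul_nonneg (hw i).le (sq_nonneg _)
  set r : ℝ := 1 - c / 4 with hr
  have hr0 : 0 < r := by linarith
  have hgap : ∀ f : S → E2 G, nsq w (f + Pop p R f) ≤ 4 * r * nsq w f := by
    intro f
    have h1 := gap (R := R) hw hp hrow hcol f
    have h2 := hpo f
    have h3 : c * nsq w f ≤ c0 * nsq w f :=
      mul_le_mul_of_nonneg_right (min_le_left _ _) (hns f)
    rw [hr]
    have : dir w p R f = dir w p (fun i j => Rt (φ i j)) f := rfl
    linarith
  refine ⟨r, hr0, by linarith, fun o k hk => ?_⟩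
  set dv : S → E2 G := Pi.single o (lp.single 2 (1 : G) (1 : ℝ)) with hdv
  have hdv1 : ∀ i g, (dv i : G → ℝ) g = dlt o i g := by
    intro i g
    unfold dlt
    by_cases hi : i = o
    · subst hi
      by_cases hg : g = 1
      · subst hg; simp [hdv]
      · simp [hdv, hg]
    · simp [hdv, hi]
  have hPapp : ∀ (f : S → E2 G) i g, (Pop p R f i : G → ℝ) g
      = ∑ j, p i j * (f j : G → ℝ) (g * φ i j) := by
    intro f i g
    show ((∑ j, p i j • R i j (f j) : E2 G) : G → ℝ) g = _
    rw [lp.coeFn_sum, Finset.sum_apply]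
    rfl
  have hform : ∀ n i g, ((Pop p R ^ n) dv i : G → ℝ) g * (χ g * u i * l ^ n)
      = u o * χ 1 * cnt A φ n o i g := by
    intro n
    induction n with
    | zero =>
      intro i g
      rw [cnt_zero, pow_zero, Module.End.one_apply, hdv1]
      unfold dlt
      split_ifs with h
      · rw [h.1, h.2]; ring
      · simp
    | succ n ih =>
      intro i g
      rw [cnt_succ, pow_succ', Module.End.mul_apply, hPapp]
      unfold Lop
      rw [Finset.sum_mul, Finset.mul_sum]
      refine Finset.sum_congr rfl fun j _ => ?_
      split_ifs with h
      · rw [← ih, hχm]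
        simp only [hpdef, h, if_true]
        have := (hu i).ne'
        field_simp
        ring
      · simp [hpdef, h]
  have hχ1 : χ 1 = 1 := by
    have := hχm 1 1
    rw [mul_one] at this
    have h2 := (hχ 1).ne'
    field_simp at this
    linarith
  have hnn : ∀ n i g, 0 ≤ ((Pop p R ^ n) dv i : G → ℝ) g := by
    intro n i g
    have h1 : 0 < χ g * u i * l ^ n := mul_pos (mul_pos (hχ g) (hu i)) (by positivity)
    have h2 : 0 ≤ u o * χ 1 * cnt A φ n o i g :=
      mul_nonneg (mul_pos (hu o) (hχ 1)).le (cnt_nonneg _ _ _ _)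
    rw [← hform] at h2
    exact nonneg_of_mul_nonneg_left h2 h1
  set X := ((Pop p R ^ k) dv o : G → ℝ) 1 with hX
  have hXc : cnt A φ k o o (1 : G) = X * l ^ k := by
    have := hform k o 1
    rw [hχ1, one_mul, mul_one] at this
    have h2 := (hu o).ne'
    have h3 : u o * cnt A φ k o o 1 = u o * (X * l ^ k) := by rw [← this]; ring
    exact mul_left_cancel₀ h2 h3
  set F := ((1 + Pop p R) ^ (2 * k)) dv with hF
  have hF1 : (Nat.centralBinom k : ℝ) * X ≤ (F o : G → ℝ) 1 := by
    have e : (F o : G → ℝ) 1 = ∑ m ∈ Finset.range (2 * k + 1),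
        ((2 * k).choose m : ℝ) * ((Pop p R ^ m) dv o : G → ℝ) 1 := by
      rw [hF, add_comm, (Commute.one_right (Pop p R)).add_pow]
      rw [LinearMap.sum_apply, Finset.sum_apply, lp.coeFn_sum, Finset.sum_apply]
      refine Finset.sum_congr rfl fun m _ => ?_
      rw [one_pow, mul_one, ← nsmul_eq_mul']
      rw [LinearMap.smul_apply, Pi.smul_apply]
      rw [← Nat.cast_smul_eq_nsmul ℝ]
      rfl
    rw [e]
    exact Finset.single_le_sum (f := fun m => ((2 * k).choose m : ℝ) *
        ((Pop p R ^ m) dv o : G → ℝ) 1)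
      (fun m _ => mul_nonneg (Nat.cast_nonneg _) (hnn _ _ _))
      (Finset.mem_range.2 (by omega : k < 2 * k + 1))
  have hF2 : (F o : G → ℝ) 1 ≤ (4 * r) ^ k := by
    have h1 := nsq_pow (w := w) (p := p) (R := R) hr0.le hgap (2 * k) dv
    have h2 : nsq w dv = w o := by
      unfold nsq
      rw [Finset.sum_eq_single o]
      · simp [hdv]
      · intro i _ hi
        simp [hdv, hi]
      · simp
    have h3 : w o * ‖F o‖ ^ 2 ≤ nsq w F :=
      Finset.single_le_sum (f := fun i => w i * ‖F i‖ ^ 2)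
        (fun i _ => mul_nonneg (hw i).le (sq_nonneg _)) (Finset.mem_univ o)
    have h4 : w o * ‖F o‖ ^ 2 ≤ w o * ((4 * r) ^ k) ^ 2 := by
      rw [h2] at h1
      calc _ ≤ _ := h3.trans h1
        _ = _ := by rw [← pow_mul, mul_comm k 2]; ring
    have h5 : ‖F o‖ ^ 2 ≤ ((4 * r) ^ k) ^ 2 := le_of_mul_le_mul_left h4 (hw o)
    have h6 : ‖F o‖ ≤ (4 * r) ^ k := le_of_sq_le_sq h5 (by positivity)
    exact (le_abs_self _).trans ((lp.norm_apply_le_norm (by norm_num) (F o) 1).trans h6)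
  have hcb : (4 : ℝ) ^ k ≤ 2 * k * Nat.centralBinom k := by
    exact_mod_cast Nat.four_pow_le_two_mul_self_mul_centralBinom k hk
  have hcp : (0 : ℝ) < Nat.centralBinom k := by exact_mod_cast Nat.centralBinom_pos k
  have hXb : X ≤ 2 * k * r ^ k := by
    have h1 : (Nat.centralBinom k : ℝ) * X ≤ Nat.centralBinom k * (2 * k * r ^ k) := by
      refine hF1.trans (hF2.trans ?_)
      rw [mul_pow]
      calc _ ≤ (2 * k * Nat.centralBinom k) * r ^ k :=
            mul_le_mul_of_nonneg_right hcb (by positivity)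
        _ = _ := by ring
    exact le_of_mul_le_mul_left h1 hcp
  rw [hXc, mul_pow]
  calc X * l ^ k ≤ (2 * k * r ^ k) * l ^ k := mul_le_mul_of_nonneg_right hXb (by positivity)
    _ = _ := by ring

end bound
section counting
variable {S : Type*} [Fintype S] {K : Type*} [Group K] {A : S → S → Bool} {φ : S → S → K}

/-- Product of labels along the first `n` edges. -/
def wp (φ : S → S → K) : ℕ → (ℕ → S) → K
  | 0, _ => 1
  | n + 1, w => φ (w 0) (w 1) * wp φ n (fun k => w (k + 1))

lemma wp_congr {S K : Type*} [Group K] {φ : S → S → K} (n : ℕ) :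
    ∀ (w w' : ℕ → S), (∀ k ≤ n, w k = w' k) → wp φ n w = wp φ n w' := by
  induction n with
  | zero => intro w w' _; rfl
  | succ n ih =>
    intro w w' h
    unfold wp
    rw [h 0 (by omega), h 1 (by omega), ih _ (fun k => w' (k + 1)) fun k hk => h (k + 1) (by omega)]

/-- Words from `i` to `o`, extended by the constant `o`. -/
def PS (A : S → S → Bool) (φ : S → S → K) (n : ℕ) (o i : S) (q : K) : Type _ :=
  {w : ℕ → S // w 0 = i ∧ (∀ k, n ≤ k → w k = o) ∧ (∀ k < n, A (w k) (w (k + 1)) = true) ∧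
    q * wp φ n w = 1}

/-- One step decomposition. -/
noncomputable def PSequiv (n : ℕ) (o i : S) (q : K) :
    PS A φ (n + 1) o i q ≃ Σ k : S, {_w : PS A φ n o k (q * φ i k) // A i k = true} where
  toFun w := ⟨w.1 1, ⟨⟨fun k => w.1 (k + 1), rfl, fun k hk => w.2.2.1 (k + 1) (by omega),
    fun k hk => w.2.2.2.1 (k + 1) (by omega), by
      have := w.2.2.2.2
      unfold wp at this
      rw [w.2.1, ← mul_assoc] at this
      exact this⟩, by
      have := w.2.2.2.1 0 (by omega)
      rw [w.2.1] at this
      exact this⟩⟩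
  invFun s := ⟨fun k => match k with
      | 0 => i
      | k + 1 => s.2.1.1 k, rfl, by
      intro k hk
      match k, hk with
      | k + 1, hk => exact s.2.1.2.2.1 k (by omega), by
      intro k hk
      match k, hk with
      | 0, _ =>
        show A i (s.2.1.1 0) = true
        rw [s.2.1.2.1]; exact s.2.2
      | k + 1, hk => exact s.2.1.2.2.2.1 k (by omega), by
      unfold wp
      show q * (φ i (s.2.1.1 0) * wp φ n s.2.1.1) = 1
      rw [s.2.1.2.1, ← mul_assoc]
      exact s.2.1.2.2.2.2⟩
  left_inv w := by
    apply Subtype.ext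
    funext k
    match k with
    | 0 => exact w.2.1.symm
    | k + 1 => rfl
  right_inv := by
    rintro ⟨k, ⟨⟨w, h1, h2⟩, h3⟩⟩
    subst h1
    rfl

lemma card_PS (n : ℕ) (o : S) : ∀ i (q : K), Finite (PS A φ n o i q) ∧
    (Nat.card (PS A φ n o i q) : ℝ) = cnt A φ n o i q := by
  induction n with
  | zero =>
    intro i q
    have hsub : Subsingleton (PS A φ 0 o i q) := ⟨fun w w' => by
      apply Subtype.ext
      funext k
      rw [w.2.2.1 k (by omega), w'.2.2.1 k (by omega)]⟩
    refine ⟨inferInstance, ?_⟩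
    rw [cnt_zero]
    unfold dlt
    split_ifs with h
    · obtain ⟨rfl, rfl⟩ := h
      have : Nonempty (PS A φ 0 i i 1) :=
        ⟨⟨fun _ => i, rfl, fun _ _ => rfl, fun k hk => absurd hk (by omega), by simp [wp]⟩⟩
      have : Nat.card (PS A φ 0 i i 1) = 1 := Nat.card_eq_one_iff_unique.2 ⟨hsub, this⟩
      rw [this]; simp
    · have : IsEmpty (PS A φ 0 o i q) := ⟨fun w => h ⟨by rw [← w.2.1, w.2.2.1 0 le_rfl], by
        have := w.2.2.2.2
        simpa [wp] using this⟩⟩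
      simp
  | succ n ih =>
    intro i q
    have hfin : ∀ k, Finite {_w : PS A φ n o k (q * φ i k) // A i k = true} := by
      intro k
      have := (ih k (q * φ i k)).1
      infer_instance
    refine ⟨Finite.of_equiv _ (PSequiv n o i q).symm, ?_⟩
    rw [Nat.card_congr (PSequiv n o i q), Nat.card_sigma, cnt_succ]
    unfold Lop
    push_cast
    refine Finset.sum_congr rfl fun k _ => ?_
    split_ifs with h
    · rw [← (ih k (q * φ i k)).2]
      congr 1
      exact Nat.card_congr (Equiv.subtypeUnivEquiv fun _ => h)
    · have : IsEmpty {_w : PS A φ n o k (q * φ i k) // A i k = true} := ⟨fun w => h w.2⟩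
      simp

lemma shift_iter {S : Type*} {A : S → S → Bool} (n : ℕ) : ∀ (x : Space A) k,
    (shift^[n] x).1 k = x.1 (k + n) := by
  induction n with
  | zero => intro x k; rfl
  | succ n ih =>
    intro x k
    rw [Function.iterate_succ_apply, ih]
    show x.1 (k + n + 1) = _
    rfl

lemma cocycle_eq {S K : Type*} [Group K] {A : S → S → Bool} {φ : S → S → K} (ψ : Space A → K)
    (h : ∀ x, ψ x = φ (x.1 0) (x.1 1)) (n : ℕ) : ∀ x, cocycle ψ n x = wp φ n x.1 := by
  induction n with
  | zero => intro x; rfl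
  | succ n ih =>
    intro x
    show ψ x * cocycle ψ n (shift x) = _
    rw [ih, h]
    rfl

lemma periodic_mod {α : Type*} (x : ℕ → α) (n : ℕ) (h : ∀ k, x (k + n) = x k) (k : ℕ) :
    x (k % n) = x k := by
  have : Function.Periodic x n := h
  exact this.map_mod_nat k

lemma card_per (ψ : Space A → K) (h : ∀ x, ψ x = φ (x.1 0) (x.1 1)) (n : ℕ) (hn : 0 < n) :
    (Nat.card {x : Space A // shift^[n] x = x ∧ cocycle ψ n x = 1} : ℝ)
      = ∑ o, cnt A φ n o o 1 := by
  have hper : ∀ x : Space A, shift^[n] x = x → ∀ k, x.1 (k + n) = x.1 k := by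
    intro x hx k
    rw [← shift_iter, hx]
  let e : {x : Space A // shift^[n] x = x ∧ cocycle ψ n x = 1} ≃ Σ o : S, PS A φ n o o 1 :=
    { toFun := fun x => ⟨x.1.1 0, ⟨fun k => if k < n then x.1.1 k else x.1.1 0, by simp, by
          intro k hk
          simp [not_lt.2 hk], by
          intro k hk
          have h1 : (if k + 1 < n then x.1.1 (k + 1) else x.1.1 0) = x.1.1 (k + 1) := by
            split_ifs with h2
            · rfl
            · have : k + 1 = 0 + n := by omega
              rw [this, hper x.1 x.2.1]
          simp only [hk, if_true, h1]
          exact x.1.2 k, by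
          have hx1 : wp φ n x.1.1 = 1 := by rw [← cocycle_eq ψ h]; exact x.2.2
          rw [one_mul]
          refine Eq.trans ?_ hx1
          apply wp_congr
          intro k hk
          split_ifs with h2
          · rfl
          · have : k = 0 + n := by omega
            rw [this, hper x.1 x.2.1]⟩⟩
      invFun := fun s => ⟨⟨fun k => s.2.1 (k % n), by
          intro k
          have h1 := s.2.2.2.2.1 (k % n) (Nat.mod_lt _ hn)
          have h2 : s.2.1 ((k + 1) % n) = s.2.1 (k % n + 1) := by
            rw [Nat.add_mod_eq_ite]
            by_cases hn1 : n = 1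
            · subst hn1
              simp only [Nat.mod_one]
              rw [s.2.2.2.1 (0 + 1) (by omega)]
              split_ifs <;> exact s.2.2.1
            · have : 1 % n = 1 := Nat.mod_eq_of_lt (by omega)
              rw [this]
              split_ifs with h3
              · have h4 := Nat.mod_lt k hn
                have h5 : k % n + 1 = n := by omega
                rw [h5, Nat.sub_self, s.2.2.1, s.2.2.2.1 n le_rfl]
              · rfl
          show A (s.2.1 (k % n)) (s.2.1 ((k + 1) % n)) = true
          rw [h2]; exact h1⟩, by
          apply Subtype.ext
          funext k
          refine (shift_iter n _ k).trans ?_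
          show s.2.1 ((k + n) % n) = s.2.1 (k % n)
          rw [Nat.add_mod_right], by
          have hs1 : wp φ n s.2.1 = 1 := by
            have := s.2.2.2.2.2
            rwa [one_mul] at this
          refine (cocycle_eq ψ h n _).trans ?_
          refine Eq.trans ?_ hs1
          apply wp_congr
          intro k hk
          show s.2.1 (k % n) = s.2.1 k
          rcases Nat.lt_or_eq_of_le hk with h1 | h1
          · rw [Nat.mod_eq_of_lt h1]
          · subst h1
            rw [Nat.mod_self, s.2.2.1, s.2.2.2.1 k le_rfl]⟩
      left_inv := by
        intro x
        apply Subtype.ext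
        apply Subtype.ext
        funext k
        simp only [Nat.mod_lt _ hn, if_true]
        exact periodic_mod _ n (hper x.1 x.2.1) k
      right_inv := by
        rintro ⟨o, w, h1, h2, h3⟩
        subst h1
        dsimp only
        have : ∀ (o : S) (ho : w (0 % n) = o) (w' : PS A φ n (w (0 % n)) (w (0 % n)) 1)
            (w'' : PS A φ n o o 1), w'.1 = w''.1 →
            (⟨w (0 % n), w'⟩ : Σ o : S, PS A φ n o o 1) = ⟨o, w''⟩ := by
          intro o ho w' w'' hw
          subst ho
          congr 1
          exact Subtype.ext hw
        apply this _ (by simp)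
        funext k
        dsimp only
        split_ifs with h4
        · rw [Nat.mod_eq_of_lt h4]
        · rw [Nat.zero_mod, h2 k (by omega)] }
  have hfin : ∀ o, Finite (PS A φ n o o 1) := fun o => (card_PS n o o 1).1
  rw [Nat.card_congr e, Nat.card_sigma]
  push_cast
  exact Finset.sum_congr rfl fun o _ => (card_PS n o o 1).2

lemma T_iter {S K : Type*} [Group K] {A : S → S → Bool} (ψ : Space A → K) (n : ℕ) :
    ∀ p : Space A × K, (T ψ)^[n] p = (shift^[n] p.1, p.2 * cocycle ψ n p.1) := by
  induction n with
  | zero => intro p; simp [cocycle]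
  | succ n ih =>
    intro p
    rw [Function.iterate_succ_apply, ih, Function.iterate_succ_apply]
    simp only [T, cocycle, mul_assoc]

lemma pth_of_seq {S K : Type*} [Group K] {A : S → S → Bool} {φ : S → S → K} (n : ℕ) :
    ∀ w : ℕ → S, (∀ k < n, A (w k) (w (k + 1)) = true) → Pth A φ n (w 0) (w n) (wp φ n w) := by
  induction n with
  | zero => intro w _; exact Pth.nil _
  | succ n ih =>
    intro w h
    exact Pth.cons (h 0 (by omega)) (ih (fun k => w (k + 1)) fun k hk => h (k + 1) (by omega))

lemma Pth.map {S K K' : Type*} [Group K] [Group K'] {A : S → S → Bool} {φ : S → S → K}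
    (F : K →* K') {n : ℕ} {i j : S} {g : K} (p : Pth A φ n i j g) :
    Pth A (fun i j => F (φ i j)) n i j (F g) := by
  induction p with
  | nil i => rw [map_one]; exact Pth.nil i
  | cons ha _ ih => rw [map_mul]; exact Pth.cons ha ih

lemma exists_point {S : Type*} {A : S → S → Bool} (hA : Aperiodic A) (j : S) :
    ∃ y : Space A, y.1 0 = j := by
  obtain ⟨N, hN, h⟩ := hA
  have hsucc : ∀ i, ∃ k, A i k = true := by
    intro i
    obtain ⟨w, h0, -, hw⟩ := h i i
    refine ⟨w 1, ?_⟩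
    have := hw 0 hN
    rwa [h0] at this
  choose s hs using hsucc
  refine ⟨⟨fun n => s^[n] j, fun n => ?_⟩, rfl⟩
  show A (s^[n] j) (s^[n + 1] j) = true
  rw [Function.iterate_succ_apply']
  exact hs _

lemma irr {S K : Type*} [Group K] {A : S → S → Bool} {φ : S → S → K} (hA : Aperiodic A)
    (ψ : Space A → K) (h : ∀ x, ψ x = φ (x.1 0) (x.1 1)) (ht : TransitiveExt ψ) :
    ∀ i j g, ∃ n, 0 < n ∧ Pth A φ n i j g := by
  obtain ⟨⟨x, g0⟩, hp⟩ := ht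
  intro i j g
  obtain ⟨N, hN, hw⟩ := id hA
  obtain ⟨w, h0, h1, hw⟩ := hw i (x.1 0)
  have q1 := pth_of_seq (φ := φ) N w hw
  rw [h0, h1] at q1
  obtain ⟨y, hy⟩ := exists_point hA j
  obtain ⟨n, hn1, hn2⟩ := hp 1 y (g0 * ((wp φ N w)⁻¹ * g))
  rw [T_iter] at hn1 hn2
  have e1 := hn1 0 (by omega)
  dsimp only at e1 hn2
  rw [shift_iter, zero_add, hy] at e1
  have e2 := mul_left_cancel hn2
  rw [cocycle_eq ψ h] at e2
  have q2 := pth_of_seq (φ := φ) n x.1 (fun k _ => x.2 k)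
  rw [e1, e2] at q2
  have q3 := q1.append q2
  rw [mul_inv_cancel_left] at q3
  exact ⟨N + n, by omega, q3⟩

end counting

section final
variable {S : Type*} [Fintype S] {K : Type*} [Group K] {A : S → S → Bool} {φ : S → S → K}

lemma card_le (ψ : Space A → K) (h : ∀ x, ψ x = φ (x.1 0) (x.1 1)) (n : ℕ) (hn : 0 < n) :
    (Nat.card {x : Space A // shift^[n] x = x ∧ cocycle ψ n x = 1} : ℝ)
      ≤ (Fintype.card S : ℝ) ^ (n + 1) := by
  rw [card_per ψ h n hn]
  calc ∑ o, cnt A φ n o o (1 : K) ≤ ∑ _o : S, (Fintype.card S : ℝ) ^ n :=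
        Finset.sum_le_sum fun o _ => cnt_le n o o (1 : K)
    _ = (Fintype.card S : ℝ) ^ (n + 1) := by simp [pow_succ, mul_comm]

lemma bdd (o : S) (ψ : Space A → K) (h : ∀ x, ψ x = φ (x.1 0) (x.1 1)) :
    ∃ C : ℝ, ∀ n : ℕ, 0 ≤ Real.log
      (Nat.card {x : Space A // shift^[n] x = x ∧ cocycle ψ n x = 1}) / n ∧
      Real.log (Nat.card {x : Space A // shift^[n] x = x ∧ cocycle ψ n x = 1}) / n ≤ C := by
  have hc : (1 : ℝ) ≤ Fintype.card S := by
    have : 0 < Fintype.card S := Fintype.card_pos_iff.2 ⟨o⟩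
    exact_mod_cast this
  have hlog : 0 ≤ Real.log (Fintype.card S) := Real.log_nonneg hc
  refine ⟨2 * Real.log (Fintype.card S), fun n => ⟨?_, ?_⟩⟩
  · exact div_nonneg (Real.log_natCast_nonneg _) (Nat.cast_nonneg _)
  · rcases Nat.eq_zero_or_pos n with rfl | hn
    · simp only [Nat.cast_zero, div_zero]; positivity
    · have hn' : (1 : ℝ) ≤ n := by exact_mod_cast hn
      rw [div_le_iff₀ (by linarith)]
      rcases Nat.eq_zero_or_pos
        (Nat.card {x : Space A // shift^[n] x = x ∧ cocycle ψ n x = 1}) with h0 | h0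
      · rw [h0]; simp only [Nat.cast_zero, Real.log_zero]; positivity
      · have := Real.log_le_log (by exact_mod_cast h0) (card_le ψ h n hn)
        rw [Real.log_pow] at this
        push_cast at this
        nlinarith

lemma cnt_growth (o : S) (ψ : Space A → K) (h : ∀ x, ψ x = φ (x.1 0) (x.1 1)) (b : ℝ)
    (hb : Real.exp (hGur ψ) < b) : ∀ᶠ n : ℕ in atTop, cnt A φ n o o (1 : K) ≤ b ^ n := by
  have hb0 : 0 < b := (Real.exp_pos _).trans hb
  have h1 : hGur ψ < Real.log b := (Real.lt_log_iff_exp_lt hb0).2 hb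
  obtain ⟨C, hC⟩ := bdd o ψ h
  have hbd : IsBoundedUnder (· ≤ ·) atTop fun n : ℕ => Real.log
      (Nat.card {x : Space A // shift^[n] x = x ∧ cocycle ψ n x = 1}) / n :=
    isBoundedUnder_of ⟨C, fun n => (hC n).2⟩
  have h2 := eventually_lt_of_limsup_lt h1 hbd
  filter_upwards [h2, eventually_gt_atTop 0] with n hn hn0
  have hle : cnt A φ n o o (1 : K) ≤
      Nat.card {x : Space A // shift^[n] x = x ∧ cocycle ψ n x = 1} := by
    rw [card_per ψ h n hn0]
    exact Finset.single_le_sum (f := fun o => cnt A φ n o o (1 : K))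
      (fun o _ => cnt_nonneg _ _ _ _) (Finset.mem_univ o)
  refine hle.trans ?_
  rcases Nat.eq_zero_or_pos
    (Nat.card {x : Space A // shift^[n] x = x ∧ cocycle ψ n x = 1}) with h0 | h0
  · rw [h0, Nat.cast_zero]; positivity
  · have hn' : (0 : ℝ) < n := by exact_mod_cast hn0
    rw [div_lt_iff₀ hn', mul_comm, ← Real.log_pow] at hn
    exact ((Real.log_lt_log_iff (by exact_mod_cast h0) (by positivity)).1 hn).le

lemma hGur_le (o : S) (ψ : Space A → K) (h : ∀ x, ψ x = φ (x.1 0) (x.1 1))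
    (hirr : ∀ i j g, ∃ n, 0 < n ∧ Pth A φ n i j g) (s : ℝ) (hs : 0 < s)
    (hcnt : ∀ o k, 0 < k → cnt A φ k o o (1 : K) ≤ 2 * k * s ^ k) :
    hGur ψ ≤ Real.log s := by
  obtain ⟨k, hk, q⟩ := hirr o o 1
  have hmul : ∀ m : ℕ, Pth A φ (m * k) o o 1 := by
    intro m
    induction m with
    | zero => rw [zero_mul]; exact Pth.nil o
    | succ m ih =>
      have := ih.append q
      rw [mul_one] at this
      rw [Nat.succ_mul]; exact this
  have hs1 : 1 ≤ s := by
    by_contra hlt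
    push Not at hlt
    have ht := tendsto_self_mul_const_pow_of_lt_one hs.le hlt
    have h2 : ∀ᶠ n : ℕ in atTop, (n : ℝ) * s ^ n < 1 / 2 := ht.eventually_lt_const (by norm_num)
    obtain ⟨N, hN⟩ := eventually_atTop.1 h2
    have h3 := hN ((N + 1) * k) (by nlinarith)
    have h4 := hcnt o ((N + 1) * k) (by positivity)
    have h5 := one_le_cnt (hmul (N + 1)) 1 (by simp)
    linarith
  obtain ⟨C, hC⟩ := bdd o ψ h
  have hc : (1 : ℝ) ≤ Fintype.card S := by
    have : 0 < Fintype.card S := Fintype.card_pos_iff.2 ⟨o⟩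
    exact_mod_cast this
  set c : ℝ := (Fintype.card S : ℝ) with hcdef
  have hup : ∀ n : ℕ, 0 < n → Real.log
      (Nat.card {x : Space A // shift^[n] x = x ∧ cocycle ψ n x = 1}) / n ≤
      Real.log (2 * c) * (n : ℝ)⁻¹ + Real.log n / n + Real.log s := by
    intro n hn
    have hn' : (1 : ℝ) ≤ n := by exact_mod_cast hn
    have hn0 : (0 : ℝ) < n := by linarith
    have e : Real.log (2 * c) * (n : ℝ)⁻¹ + Real.log n / n + Real.log s
        = (Real.log (2 * c) + Real.log n + n * Real.log s) / n := by
      field_simp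
    rw [e]
    refine div_le_div_of_nonneg_right ?_ hn0.le
    rcases Nat.eq_zero_or_pos
      (Nat.card {x : Space A // shift^[n] x = x ∧ cocycle ψ n x = 1}) with h0 | h0
    · rw [h0, Nat.cast_zero, Real.log_zero]
      have a1 : 0 ≤ Real.log (2 * c) := Real.log_nonneg (by linarith)
      have a2 : 0 ≤ Real.log n := Real.log_nonneg hn'
      have a3 : 0 ≤ Real.log s := Real.log_nonneg hs1
      positivity
    · have hle : (Nat.card {x : Space A // shift^[n] x = x ∧ cocycle ψ n x = 1} : ℝ)
          ≤ (2 * c) * n * s ^ n := by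
        rw [card_per ψ h n hn]
        calc _ ≤ ∑ o : S, 2 * (n : ℝ) * s ^ n := Finset.sum_le_sum fun o _ => hcnt o n hn
          _ = _ := by simp only [Finset.sum_const, Finset.card_univ, nsmul_eq_mul]; ring
      have := Real.log_le_log (by exact_mod_cast h0) hle
      rw [Real.log_mul (by positivity) (by positivity), Real.log_mul (by positivity) hn0.ne',
        Real.log_pow] at this
      exact this
  have hlim : Tendsto (fun n : ℕ => Real.log (2 * c) * (n : ℝ)⁻¹ + Real.log n / n + Real.log s)
      atTop (nhds (Real.log s)) := by
    have t1 : Tendsto (fun n : ℕ => Real.log (2 * c) * (n : ℝ)⁻¹) atTop (nhds 0) := by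
      have := (tendsto_inv_atTop_nhds_zero_nat (𝕜 := ℝ)).const_mul (Real.log (2 * c))
      rwa [mul_zero] at this
    have t2 : Tendsto (fun n : ℕ => Real.log (n : ℝ) / n) atTop (nhds 0) := by
      have := (Real.isLittleO_log_id_atTop.tendsto_div_nhds_zero).comp
        (tendsto_natCast_atTop_atTop (R := ℝ))
      exact this
    have := (t1.add t2).add_const (Real.log s)
    simpa using this
  rw [← hlim.limsup_eq]
  refine limsup_le_limsup ?_ ?_ ?_
  · filter_upwards [eventually_gt_atTop 0] with n hn
    exact hup n hn
  · exact (isBoundedUnder_of ⟨0, fun n => (hC n).1⟩ :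
      IsBoundedUnder (· ≥ ·) atTop _).isCoboundedUnder_le
  · exact hlim.isBoundedUnder_le

end final

end GE

/-- If `T_ψ` is transitive and `G` is not amenable, then
`h_Gur(T_ψ) < h_Gur(T_{ψ^{ab}})`. -/
theorem statement3
    {S : Type*} [Fintype S] {A : S → S → Bool} (hA : Aperiodic A)
    {G : Type*} [Group G] [Countable G]
    (ψ : Space A → G) (hψ : TwoCoord ψ)
    (htrans : TransitiveExt ψ) (hna : ¬ Amenable G) :
    hGur ψ < hGur (fun x => Abelianization.of (ψ x)) := by
  classical
  obtain ⟨x0, -⟩ := id htrans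
  have o : S := x0.1.1 0
  let φ : S → S → G := fun i j =>
    if h : ∃ x : Space A, x.1 0 = i ∧ x.1 1 = j then ψ h.choose else 1
  have hφ : ∀ x, ψ x = φ (x.1 0) (x.1 1) := by
    intro x
    have h : ∃ y : Space A, y.1 0 = x.1 0 ∧ y.1 1 = x.1 1 := ⟨x, rfl, rfl⟩
    simp only [φ]
    rw [dif_pos h]
    exact hψ _ _ h.choose_spec.1.symm h.choose_spec.2.symm
  have hirr := GE.irr hA ψ hφ htrans
  let Φ : S → S → Abelianization G := fun i j => Abelianization.of (φ i j)
  have hirrQ : ∀ i j g, ∃ n, 0 < n ∧ GE.Pth A Φ n i j g := by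
    intro i j g
    obtain ⟨g', rfl⟩ : ∃ g', Abelianization.of g' = g := QuotientGroup.mk_surjective g
    obtain ⟨n, hn, p⟩ := hirr i j g'
    exact ⟨n, hn, p.map Abelianization.of⟩
  have hΦ : ∀ x, (fun x => Abelianization.of (ψ x)) x = Φ (x.1 0) (x.1 1) := by
    intro x
    simp only [Φ]
    rw [hφ x]
  obtain ⟨m, hm⟩ := GE.exists_mean
    ((Finset.univ : Finset (S × S)).toList.map fun s => Φ s.1 s.2) (by
      intro H hH
      have hp : ∀ n i j g, GE.Pth A Φ n i j g → g ∈ H := by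
        intro n i j g p
        induction p with
        | nil i => exact H.one_mem
        | @cons n i k j g ha _ ih =>
          refine H.mul_mem (hH _ ?_) ih
          exact List.mem_map.2 ⟨(i, k), by simp, rfl⟩
      rw [eq_top_iff]
      intro g _
      obtain ⟨n, -, p⟩ := hirrQ o o g
      exact hp _ _ _ _ p)
  set hab := hGur (fun x => Abelianization.of (ψ x)) with hhab
  obtain ⟨h, h0, hs⟩ := GE.exists_super_crit o hirrQ (Real.exp_pos hab)
    (fun b hb => GE.cnt_growth o _ hΦ b hb)
  obtain ⟨χ, u, hχ, hχm, hu, hsu⟩ := GE.exists_expo o hirrQ (Real.exp_pos hab) m hm h h0 hs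
  obtain ⟨r, hr0, hr1, hcnt⟩ := GE.cnt_bound o (Real.exp_pos hab) hirr hna
    (fun g => χ (Abelianization.of g)) u (fun g => hχ _)
    (fun g g' => by rw [map_mul, hχm]) hu hsu
  have hfin := GE.hGur_le o ψ hφ hirr (Real.exp hab * r) (mul_pos (Real.exp_pos _) hr0) hcnt
  rw [Real.log_mul (Real.exp_pos _).ne' hr0.ne', Real.log_exp] at hfin
  have := Real.log_neg hr0 hr1
  linarith
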